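/- Robust mean estimation under Huber contamination in squared Euclidean norm: there exist universal constants c, c₁, C₁ > 0 such that for all n,d ∈ ℕ, all ε ∈ [0,1), every symmetric positive definite Σ ∈ ℝ^{d×d}, and every δ with exp(−c·n·(1−300ε)) ≤ δ ≤ 1/4, taking Θ := ℝ^d and 𝒫_θ := {R^{⊗n} : R = (1−ε)P + εQ, where P is a probability measure on ℝ^d with mean θ and covariance Σ and Q is any probability measure on ℝ^d}, one has c₁·(tr(Σ)/n + ‖Σ‖_op·ε + ‖Σ‖_op·log(1/δ)/n) ≤ M(δ, 𝒫_Θ, ‖·‖₂²) ≤ C₁·(tr(Σ)/n + ‖Σ‖_op·ε + ‖Σ‖_op·log(1/δ)/n). -/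

import Mathlib

/-!
**Lower bound.** Let `u` be an orthonormal eigenbasis of `S` with eigenvalues `lam`, and consider the
random vector `∑ᵢ ± aᵢ bᵢ uᵢ`, where `b` is a mask of independent Bernoulli variables of rate `p` and
`aᵢ² p (1 - p) = lamᵢ`. Its covariance is `S` whatever the signs, and the squared `i`-th coordinate of
its mean is at least `lamᵢ p`. If the mask of coordinate `i` vanishes throughout the sample, the data
carry no information about the `i`-th sign, so an estimator errs by the squared mean of the unseen
coordinates for at least half of the sign patterns (`exists_sign`, `lower_generic`). The choice
`p = 1/(16n)` leaves most of the mean unseen and gives the trace term (`lower_trace`);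
`p = log (1/δ) / (8n)` leaves the leading coordinate unseen with probability more than `2δ` and gives
the deviation term (`lower_log`). For the contamination term, with `p = ε/(1-ε)`, contamination of
mass `ε` makes two laws with opposite leading signs indistinguishable (`lower_eps`).

**Upper bound.** The sample is cut into `k` blocks of size `m`, with `k` about `40 (log (1/δ) + ε n)`.
By Chebyshev's inequality and a union bound over outliers, the mean of a block deviates from `θ` by more
than `√ρ` in a direction `u` with probability at most `ε m + ⟪u, S u⟫ / (m ρ)` (`block_bad`). To control
the number of bad blocks in all unit directions at once, with the dimension entering only through
`tr S`, the directions are smoothed by a Gaussian of variance `w = 10/k`: an exponential moment bound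
averaged over the centred Gaussian (`pac_event`) transfers by the Donsker–Varadhan inequality to every
shifted Gaussian (`gaussV_pac`, `pac_det`), the relative entropy `1/(2w)` being a small multiple of `k`,
and a block bad in direction `v` is bad with probability at least one half in a Gaussian direction
centred at `v` (`gaussV_half`). Hence, outside an event of probability `δ`, fewer than half of the
blocks are bad in each direction. The estimator selects, from a dense sequence, the first point within
`2√ρ` of a majority of the block means in every direction; in each direction it shares a good block
with `θ`, so its squared error is at most `10 ρ` (`close_of_goodSet`), and `ρ` is of the announced
order.
-/

open MeasureTheory ENNReal ProbabilityTheory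

/-- The minimax `(1-δ)`th quantile. -/
noncomputable def minimaxQuantile {Θ 𝒳 : Type*} [MeasurableSpace Θ] [MeasurableSpace 𝒳]
    (Pfam : Θ → Set (Measure 𝒳)) (L : Θ → Θ → ℝ) (δ : ℝ) : ℝ≥0∞ :=
  ⨅ T : {f : 𝒳 → Θ // Measurable f}, ⨆ θ : Θ, ⨆ P ∈ Pfam θ,
    sInf {r : ℝ≥0∞ | ENNReal.ofReal (1 - δ) ≤ P {x | ENNReal.ofReal (L (T.1 x) θ) ≤ r}}

/-- Euclidean operator norm of a matrix. -/
noncomputable def matOpNorm {m k : ℕ} (A : Matrix (Fin m) (Fin k) ℝ) : ℝ :=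
  sSup {t : ℝ | ∃ v : Fin k → ℝ, ∑ j, v j ^ 2 ≤ 1 ∧
    t = Real.sqrt (∑ i, (A.mulVec v i) ^ 2)}

/-- The Huber `ε`-contaminated class around distributions with mean `θ` and covariance `S`:
all measures `R^{⊗n}` with `R = (1-ε)P + εQ`, where `P` has mean `θ` and covariance `S`
and `Q` is arbitrary. -/
noncomputable def huberClass (n d : ℕ) (ε : ℝ) (S : Matrix (Fin d) (Fin d) ℝ)
    (θ : Fin d → ℝ) : Set (Measure (Fin n → Fin d → ℝ)) :=
  {μ | ∃ P Q : Measure (Fin d → ℝ), IsProbabilityMeasure P ∧ IsProbabilityMeasure Q ∧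
    (∀ i, Integrable (fun x => x i) P ∧ (∫ x, x i ∂P) = θ i) ∧
    (∀ i j, Integrable (fun x => (x i - θ i) * (x j - θ j)) P ∧
      (∫ x, (x i - θ i) * (x j - θ j) ∂P) = S i j) ∧
    μ = Measure.pi fun _ : Fin n => ENNReal.ofReal (1 - ε) • P + ENNReal.ofReal ε • Q}

/-! ### Quantile risk and masked spike laws -/

/-- Lower bounds on the quantile risk: every estimator fails to reach accuracy `r` under some law. -/
lemma le_minimaxQuantile {Θ 𝒳 : Type*} [MeasurableSpace Θ] [MeasurableSpace 𝒳]
    (Pfam : Θ → Set (Measure 𝒳)) (L : Θ → Θ → ℝ) (δ r : ℝ)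
    (h : ∀ T : 𝒳 → Θ, Measurable T → ∃ θ, ∃ P ∈ Pfam θ,
      P {x | L (T x) θ < r} < ENNReal.ofReal (1 - δ)) :
    ENNReal.ofReal r ≤ minimaxQuantile Pfam L δ := by
  refine le_iInf fun T => ?_
  obtain ⟨θ, P, hP, hlt⟩ := h T.1 T.2
  refine le_trans ?_ (le_iSup_of_le θ (le_iSup₂_of_le P hP le_rfl))
  refine le_sInf fun t ht => ?_
  by_contra! hc
  refine absurd (lt_of_le_of_lt (le_trans ht (measure_mono fun x hx => ?_)) hlt) (lt_irrefl _)
  exact (ENNReal.ofReal_lt_ofReal_iff'.1 (lt_of_le_of_lt hx hc)).1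

/-- Upper bounds on the quantile risk, by exhibiting one estimator. -/
lemma minimaxQuantile_le {Θ 𝒳 : Type*} [MeasurableSpace Θ] [MeasurableSpace 𝒳]
    (Pfam : Θ → Set (Measure 𝒳)) (L : Θ → Θ → ℝ) (δ r : ℝ) (T : 𝒳 → Θ) (hT : Measurable T)
    (h : ∀ θ, ∀ P ∈ Pfam θ, ENNReal.ofReal (1 - δ) ≤ P {x | L (T x) θ ≤ r}) :
    minimaxQuantile Pfam L δ ≤ ENNReal.ofReal r := by
  refine iInf_le_of_le ⟨T, hT⟩ (iSup_le fun θ => iSup₂_le fun P hP => sInf_le ?_)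
  exact le_trans (h θ P hP) (measure_mono fun x hx => ENNReal.ofReal_le_ofReal hx)

/-- Bernoulli law on `Bool` with success probability `p`. -/
noncomputable def bernM (p : ℝ) : Measure Bool :=
  ENNReal.ofReal (1 - p) • Measure.dirac false + ENNReal.ofReal p • Measure.dirac true

/-- Law of a vector of `d` independent Bernoulli masks. -/
noncomputable def maskM (d : ℕ) (p : ℝ) : Measure (Fin d → Bool) :=
  Measure.pi fun _ => bernM p

lemma bernM_prob {p : ℝ} (h0 : 0 ≤ p) (h1 : p ≤ 1) : IsProbabilityMeasure (bernM p) := by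
  constructor
  simp only [bernM, Measure.add_apply, Measure.smul_apply, measure_univ, smul_eq_mul, mul_one]
  rw [← ENNReal.ofReal_add (by linarith) h0]; simp

lemma maskM_prob {d : ℕ} {p : ℝ} (h0 : 0 ≤ p) (h1 : p ≤ 1) :
    IsProbabilityMeasure (maskM d p) := by
  have := bernM_prob h0 h1
  unfold maskM; infer_instance

lemma integral_bernM {p : ℝ} (h0 : 0 ≤ p) (h1 : p ≤ 1) (f : Bool → ℝ) :
    ∫ b, f b ∂(bernM p) = (1 - p) * f false + p * f true := by
  unfold bernM
  rw [integral_add_measure (Integrable.of_finite.smul_measure (by simp))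
      (Integrable.of_finite.smul_measure (by simp)),
    integral_smul_measure, integral_smul_measure, integral_dirac, integral_dirac,
    ENNReal.toReal_ofReal h0, ENNReal.toReal_ofReal (by linarith)]
  simp

lemma integral_mask_one {d : ℕ} {p : ℝ} (h0 : 0 ≤ p) (h1 : p ≤ 1) (f : Bool → ℝ) (i : Fin d) :
    ∫ b, f (b i) ∂(maskM d p) = (1 - p) * f false + p * f true := by
  have := bernM_prob h0 h1
  unfold maskM
  rw [integral_comp_eval (μ := fun _ : Fin d => bernM p) (i := i) (f := f)
    (Integrable.of_finite.aestronglyMeasurable), integral_bernM h0 h1]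

lemma integral_mask_two {d : ℕ} {p : ℝ} (h0 : 0 ≤ p) (h1 : p ≤ 1) (f : Bool → ℝ) (i j : Fin d)
    (hij : i ≠ j) :
    ∫ b, f (b i) * f (b j) ∂(maskM d p) = ((1 - p) * f false + p * f true) ^ 2 := by
  have := bernM_prob h0 h1
  have := maskM_prob (d := d) h0 h1
  have hI : iIndepFun (fun (i : Fin d) (b : Fin d → Bool) => f (b i)) (maskM d p) :=
    iIndepFun_pi (μ := fun _ : Fin d => bernM p) (X := fun _ => f)
      (fun _ => (measurable_of_finite f).aemeasurable)
  have h2 := (hI.indepFun hij).integral_fun_mul_eq_mul_integral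
    Integrable.of_finite.aestronglyMeasurable Integrable.of_finite.aestronglyMeasurable
  rw [h2, integral_mask_one h0 h1 f, integral_mask_one h0 h1 f, sq]

/-- The point `∑ᵢ aᵢ bᵢ uᵢ` selected by the mask `b`; in the application `u` is an orthonormal basis of
eigenvectors and `u i k` is the `k`-th coordinate of the `i`-th vector. -/
noncomputable def spike {d : ℕ} (u : Fin d → Fin d → ℝ) (a : Fin d → ℝ) (b : Fin d → Bool) :
    Fin d → ℝ :=
  fun k => ∑ i, a i * (if b i then 1 else 0) * u i k

lemma spike_mean {d : ℕ} {p : ℝ} (h0 : 0 ≤ p) (h1 : p ≤ 1) (u : Fin d → Fin d → ℝ)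
    (a : Fin d → ℝ) (k : Fin d) :
    ∫ b, spike u a b k ∂(maskM d p) = ∑ i, a i * p * u i k := by
  have := maskM_prob (d := d) h0 h1
  unfold spike
  rw [integral_finsetSum _ (fun _ _ => Integrable.of_finite)]
  refine Finset.sum_congr rfl fun i _ => ?_
  rw [integral_mul_const, integral_const_mul]
  rw [integral_mask_one h0 h1 (fun c : Bool => if c then (1:ℝ) else 0)]
  simp

lemma spike_cov {d : ℕ} {p : ℝ} (h0 : 0 ≤ p) (h1 : p ≤ 1) (u : Fin d → Fin d → ℝ)
    (a : Fin d → ℝ) (k l : Fin d) :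
    ∫ b, (spike u a b k - ∑ i, a i * p * u i k) * (spike u a b l - ∑ i, a i * p * u i l)
      ∂(maskM d p) = ∑ i, a i ^ 2 * (p * (1 - p)) * u i k * u i l := by
  have := maskM_prob (d := d) h0 h1
  set f : Bool → ℝ := fun c => (if c then 1 else 0) - p with hf
  have e : ∀ b : Fin d → Bool, ∀ k, spike u a b k - ∑ i, a i * p * u i k
      = ∑ i, a i * u i k * f (b i) := by
    intro b k
    rw [spike, ← Finset.sum_sub_distrib]
    refine Finset.sum_congr rfl fun i _ => ?_
    simp only [hf]; ring
  simp_rw [e, Finset.sum_mul_sum]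
  rw [integral_finsetSum _ (fun _ _ => Integrable.of_finite)]
  refine Finset.sum_congr rfl fun i _ => ?_
  rw [integral_finsetSum _ (fun _ _ => Integrable.of_finite), Finset.sum_eq_single i]
  · have : ∀ b : Fin d → Bool, a i * u i k * f (b i) * (a i * u i l * f (b i))
      = a i ^ 2 * u i k * u i l * (fun c => f c ^ 2) (b i) := by intro b; simp only; ring
    simp_rw [this]
    rw [integral_const_mul]
    rw [integral_mask_one h0 h1 (fun c => f c ^ 2)]
    simp [hf]; ring
  · intro j _ hj
    have : ∀ b : Fin d → Bool, a i * u i k * f (b i) * (a j * u j l * f (b j))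
      = a i * u i k * a j * u j l * (f (b i) * f (b j)) := by intro b; ring
    simp_rw [this]
    rw [integral_const_mul, integral_mask_two h0 h1 f i j hj.symm]
    simp [hf]; right; ring
  · simp

/-- Law of `spike u a b` when `b` is a Bernoulli mask. -/
noncomputable def spikeM {d : ℕ} (p : ℝ) (u : Fin d → Fin d → ℝ) (a : Fin d → ℝ) :
    Measure (Fin d → ℝ) := (maskM d p).map (spike u a)

lemma spikeM_prob {d : ℕ} {p : ℝ} (h0 : 0 ≤ p) (h1 : p ≤ 1) (u : Fin d → Fin d → ℝ)
    (a : Fin d → ℝ) : IsProbabilityMeasure (spikeM p u a) := by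
  have := maskM_prob (d := d) h0 h1
  exact Measure.isProbabilityMeasure_map (measurable_of_finite _).aemeasurable

/-- For amplitudes calibrated to the spectrum of `S`, contaminated spike laws belong to the Huber
class, whatever the contamination `Q`. -/
lemma spikeM_mem {n d : ℕ} {p ε : ℝ} (h0 : 0 ≤ p) (h1 : p ≤ 1)
    (u : Fin d → Fin d → ℝ) (a lam : Fin d → ℝ) (S : Matrix (Fin d) (Fin d) ℝ)
    (hS : ∀ k l, S k l = ∑ i, lam i * u i k * u i l) (ha : ∀ i, a i ^ 2 * (p * (1 - p)) = lam i)
    (Q : Measure (Fin d → ℝ)) (hQ : IsProbabilityMeasure Q) :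
    (Measure.pi fun _ : Fin n => ENNReal.ofReal (1 - ε) • spikeM p u a + ENNReal.ofReal ε • Q) ∈
      huberClass n d ε S (fun k => ∑ i, a i * p * u i k) := by
  have := maskM_prob (d := d) h0 h1
  refine ⟨spikeM p u a, Q, spikeM_prob h0 h1 u a, hQ, fun i => ⟨?_, ?_⟩, fun i j => ⟨?_, ?_⟩, rfl⟩
  · rw [spikeM, integrable_map_measure (Measurable.aestronglyMeasurable (by fun_prop))
      (measurable_of_finite _).aemeasurable]
    exact Integrable.of_finite
  · rw [spikeM, integral_map (measurable_of_finite _).aemeasurable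
      (Measurable.aestronglyMeasurable (by fun_prop))]
    exact spike_mean h0 h1 u a i
  · rw [spikeM, integrable_map_measure (Measurable.aestronglyMeasurable (by fun_prop))
      (measurable_of_finite _).aemeasurable]
    exact Integrable.of_finite
  · rw [spikeM, integral_map (measurable_of_finite _).aemeasurable
      (Measurable.aestronglyMeasurable (by fun_prop))]
    rw [spike_cov h0 h1 u a i j, hS]
    simp_rw [ha]

/-! ### Indistinguishable sign patterns -/

lemma sum_sq_comb {d : ℕ} (u : Fin d → Fin d → ℝ)
    (hu : ∀ i j, ∑ k, u i k * u j k = if i = j then 1 else 0) (c : Fin d → ℝ) :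
    ∑ k, (∑ i, c i * u i k) ^ 2 = ∑ i, c i ^ 2 := by
  simp_rw [sq, Finset.sum_mul_sum]
  rw [Finset.sum_comm]
  refine Finset.sum_congr rfl fun i _ => ?_
  rw [Finset.sum_comm]
  have : ∀ j, ∑ k, c i * u i k * (c j * u j k) = c i * c j * (if i = j then 1 else 0) := by
    intro j
    rw [← hu i j, Finset.mul_sum]
    exact Finset.sum_congr rfl fun k _ => by ring
  simp_rw [this]
  simp

/-- Amplitudes `± αᵢ` with the signs prescribed by `σ`. -/
noncomputable def sgAmp {d : ℕ} (α : Fin d → ℝ) (σ : Fin d → Bool) : Fin d → ℝ :=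
  fun i => (if σ i then 1 else -1) * α i

/-- Reverse the signs of `σ` at the coordinates in `U`. -/
def flipAt {d : ℕ} (U : Fin d → Bool) (σ : Fin d → Bool) : Fin d → Bool :=
  fun i => if U i then !(σ i) else σ i

lemma flipAt_invol {d : ℕ} (U : Fin d → Bool) : Function.Involutive (flipAt U) := by
  intro σ; funext i; unfold flipAt; by_cases h : U i <;> simp [h]

/-- No point is close to both means when two sign patterns differ exactly on `U`: the means are at
squared distance `4 ∑_{i ∈ U} (αᵢ p)²`. -/
lemma flip_sep {d : ℕ} {p r : ℝ} (u : Fin d → Fin d → ℝ)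
    (hu : ∀ i j, ∑ k, u i k * u j k = if i = j then 1 else 0) (α : Fin d → ℝ)
    (U σ : Fin d → Bool) (hr : r ≤ ∑ i, if U i then (α i * p) ^ 2 else 0) (x : Fin d → ℝ)
    (h1 : ∑ k, (x k - ∑ i, sgAmp α σ i * p * u i k) ^ 2 < r)
    (h2 : ∑ k, (x k - ∑ i, sgAmp α (flipAt U σ) i * p * u i k) ^ 2 < r) : False := by
  set A : Fin d → ℝ := fun k => ∑ i, sgAmp α σ i * p * u i k
  set B : Fin d → ℝ := fun k => ∑ i, sgAmp α (flipAt U σ) i * p * u i k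
  have e : ∑ k, (A k - B k) ^ 2 = 4 * ∑ i, if U i then (α i * p) ^ 2 else 0 := by
    have : ∀ k, A k - B k = ∑ i, (sgAmp α σ i * p - sgAmp α (flipAt U σ) i * p) * u i k := by
      intro k
      simp only [A, B]
      rw [← Finset.sum_sub_distrib]
      exact Finset.sum_congr rfl fun i _ => by ring
    simp_rw [this]
    rw [sum_sq_comb u hu, Finset.mul_sum]
    refine Finset.sum_congr rfl fun i _ => ?_
    unfold sgAmp flipAt
    by_cases h : U i <;> by_cases h' : σ i <;> simp [h, h'] <;> ring
  have h3 : ∑ k, (A k - B k) ^ 2 ≤ ∑ k, 2 * ((x k - A k) ^ 2 + (x k - B k) ^ 2) :=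
    Finset.sum_le_sum fun k _ => by nlinarith [sq_nonneg ((x k - A k) + (x k - B k))]
  rw [← Finset.mul_sum, Finset.sum_add_distrib] at h3
  simp only [A, B] at h3 e
  linarith

/-- The coordinates that are masked in every one of the `n` samples. -/
def unseen {n d : ℕ} (b : Fin n → Fin d → Bool) : Fin d → Bool :=
  fun i => decide (∀ j, b j i = false)

/-- Flipping the signs of the unseen coordinates does not change the sample. -/
lemma spike_flip {n d : ℕ} (u : Fin d → Fin d → ℝ) (α : Fin d → ℝ) (b : Fin n → Fin d → Bool)
    (σ : Fin d → Bool) (j : Fin n) :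
    spike u (sgAmp α (flipAt (unseen b) σ)) (b j) = spike u (sgAmp α σ) (b j) := by
  funext k
  unfold spike
  refine Finset.sum_congr rfl fun i _ => ?_
  by_cases h : b j i
  · have : unseen b i = false := by
      simp only [unseen, decide_eq_false_iff_not, not_forall]; exact ⟨j, by simp [h]⟩
    simp [sgAmp, flipAt, this]
  · simp [h]

/-- Averaging over all sign patterns: for a sample `b` with a heavy set of unseen coordinates, `T` sees
the same data for `σ` and for `flipAt (unseen b) σ`, so it can be right for at most half of the
patterns. -/
lemma exists_sign {n d : ℕ} {p : ℝ} (r : ℝ) (h0 : 0 ≤ p) (h1 : p ≤ 1) (u : Fin d → Fin d → ℝ)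
    (hu : ∀ i j, ∑ k, u i k * u j k = if i = j then 1 else 0) (α : Fin d → ℝ)
    (T : (Fin n → Fin d → ℝ) → Fin d → ℝ) :
    ∃ σ : Fin d → Bool,
      (Measure.pi fun _ : Fin n => maskM d p).real
        {b | ∑ k, (T (fun j => spike u (sgAmp α σ) (b j)) k
          - ∑ i, sgAmp α σ i * p * u i k) ^ 2 < r} ≤
      1 - (Measure.pi fun _ : Fin n => maskM d p).real
        {b | r ≤ ∑ i, if unseen b i then (α i * p) ^ 2 else 0} / 2 := by
  classical
  have := maskM_prob (d := d) h0 h1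
  set μ := Measure.pi fun _ : Fin n => maskM d p with hμ
  set E : (Fin d → Bool) → Set (Fin n → Fin d → Bool) := fun σ =>
    {b | ∑ k, (T (fun j => spike u (sgAmp α σ) (b j)) k
          - ∑ i, sgAmp α σ i * p * u i k) ^ 2 < r} with hE
  set B : Set (Fin n → Fin d → Bool) :=
    {b | r ≤ ∑ i, if unseen b i then (α i * p) ^ 2 else 0} with hB
  have mall : ∀ s : Set (Fin n → Fin d → Bool), MeasurableSet s := fun s => s.toFinite.measurableSet
  have key : ∀ b, ∑ σ, (E σ).indicator (fun _ => (1:ℝ)) b ≤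
      ∑ σ : Fin d → Bool, (1 - B.indicator (fun _ => (1:ℝ)) b / 2) := by
    intro b
    -- the flipped set depends on `b` only, so flipping permutes the sign patterns
    have flip : ∑ σ, (E σ).indicator (fun _ => (1:ℝ)) b =
        ∑ σ, (E (flipAt (unseen b) σ)).indicator (fun _ => (1:ℝ)) b :=
      (Equiv.sum_comp (flipAt_invol (unseen b)).toPerm
        (fun σ => (E σ).indicator (fun _ => (1:ℝ)) b)).symm
    have two : ∑ σ, ((E σ).indicator (fun _ => (1:ℝ)) b +
        (E (flipAt (unseen b) σ)).indicator (fun _ => (1:ℝ)) b) ≤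
        ∑ σ : Fin d → Bool, 2 * (1 - B.indicator (fun _ => (1:ℝ)) b / 2) := by
      refine Finset.sum_le_sum fun σ _ => ?_
      by_cases hb : b ∈ B
      · by_cases h1 : b ∈ E σ
        · by_cases h2 : b ∈ E (flipAt (unseen b) σ)
          · exfalso
            simp only [hE, Set.mem_ofPred_eq] at h1 h2
            simp_rw [spike_flip] at h2
            exact flip_sep u hu α (unseen b) σ hb _ h1 h2
          · simp [hb, h1, h2]; norm_num
        · by_cases h2 : b ∈ E (flipAt (unseen b) σ) <;> (simp [hb, h1, h2]; norm_num)
      · by_cases h1 : b ∈ E σ <;> by_cases h2 : b ∈ E (flipAt (unseen b) σ) <;>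
          (simp [hb, h1, h2]; try norm_num)
    rw [Finset.sum_add_distrib, ← flip, ← Finset.mul_sum] at two
    linarith
  have int := integral_mono (μ := μ) Integrable.of_finite Integrable.of_finite key
  rw [integral_finsetSum _ (fun _ _ => Integrable.of_finite),
    integral_finsetSum _ (fun _ _ => Integrable.of_finite)] at int
  simp_rw [integral_indicator_const _ (mall _)] at int
  rw [integral_sub (Integrable.of_finite) (Integrable.of_finite), integral_div,
    integral_indicator_const _ (mall _)] at int
  obtain ⟨σ, -, hσ⟩ := Finset.exists_le_of_sum_le Finset.univ_nonempty int
  refine ⟨σ, ?_⟩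
  simpa using hσ

/-! ### Trace and deviation lower bounds -/

/-- Spectral decomposition `S = ∑ᵢ lamᵢ uᵢ uᵢᵀ` in coordinates, with the operator norm bounded by one of
the eigenvalues. -/
lemma exists_spectral {d : ℕ} (hd : 0 < d) (S : Matrix (Fin d) (Fin d) ℝ) (hS : S.PosDef) :
    ∃ (u : Fin d → Fin d → ℝ) (lam : Fin d → ℝ),
      (∀ i j, ∑ k, u i k * u j k = if i = j then 1 else 0) ∧
      (∀ k l, S k l = ∑ i, lam i * u i k * u i l) ∧ (∀ i, 0 < lam i) ∧
      S.trace = ∑ i, lam i ∧ ∃ i0, matOpNorm S ≤ lam i0 := by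
  classical
  have hH := hS.isHermitian
  set u : Fin d → Fin d → ℝ := fun i k => hH.eigenvectorBasis i k with hu
  set lam := hH.eigenvalues with hlam
  have ho : ∀ i j, ∑ k, u i k * u j k = if i = j then 1 else 0 := by
    intro i j
    have := orthonormal_iff_ite.1 hH.eigenvectorBasis.orthonormal i j
    rw [← this, PiLp.inner_apply]
    exact Finset.sum_congr rfl fun k _ => by simp [hu, mul_comm]
  have hs : ∀ k l, S k l = ∑ i, lam i * u i k * u i l := by
    intro k l
    conv_lhs => rw [hH.spectral_theorem]
    rw [Unitary.conjStarAlgAut_apply, Matrix.mul_apply]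
    refine Finset.sum_congr rfl fun i _ => ?_
    rw [Matrix.mul_diagonal, Matrix.star_apply]
    simp only [hu, hlam, Matrix.IsHermitian.eigenvectorUnitary_apply, Function.comp_apply,
      RCLike.ofReal_real_eq_id, id_eq, star_trivial]
    ring
  have hpos : ∀ i, 0 < lam i := hS.eigenvalues_pos
  refine ⟨u, lam, ho, hs, hpos, by simpa using hH.trace_eq_sum_eigenvalues, ?_⟩
  have : Nonempty (Fin d) := ⟨⟨0, hd⟩⟩
  obtain ⟨i0, hi0⟩ := Finite.exists_max lam
  refine ⟨i0, Real.sSup_le ?_ (hpos i0).le⟩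
  rintro t ⟨v, hv, rfl⟩
  rw [Real.sqrt_le_left (hpos i0).le]
  have e1 : ∀ k, S.mulVec v k = ∑ i, (lam i * ∑ l, u i l * v l) * u i k := by
    intro k
    simp only [Matrix.mulVec, dotProduct, hs, Finset.sum_mul, Finset.mul_sum]
    rw [Finset.sum_comm]
    exact Finset.sum_congr rfl fun _ _ => Finset.sum_congr rfl fun _ _ => by ring
  simp_rw [e1]
  rw [sum_sq_comb u ho]
  have e2 : ∑ i, (∑ l, u i l * v l) ^ 2 = ∑ l, v l ^ 2 := by
    set w : EuclideanSpace ℝ (Fin d) := WithLp.toLp 2 v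
    have := hH.eigenvectorBasis.sum_sq_norm_inner_right w
    rw [EuclideanSpace.norm_sq_eq] at this
    have h3 : ∀ i, ‖inner ℝ (hH.eigenvectorBasis i) w‖ ^ 2 = (∑ l, u i l * v l) ^ 2 := by
      intro i
      rw [PiLp.inner_apply, Real.norm_eq_abs, sq_abs]
      congr 1
      exact Finset.sum_congr rfl fun k _ => by simp [hu, w, mul_comm]
    simp_rw [h3] at this
    rw [this]; simp [w]
  calc ∑ i, (lam i * ∑ l, u i l * v l) ^ 2 ≤ ∑ i, lam i0 ^ 2 * (∑ l, u i l * v l) ^ 2 := by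
        refine Finset.sum_le_sum fun i _ => ?_
        rw [mul_pow]
        exact mul_le_mul_of_nonneg_right (pow_le_pow_left₀ (hpos i).le (hi0 i) 2) (sq_nonneg _)
    _ = lam i0 ^ 2 * ∑ l, v l ^ 2 := by rw [← Finset.mul_sum, e2]
    _ ≤ lam i0 ^ 2 := by nlinarith [sq_nonneg (lam i0)]

lemma mix_self {d : ℕ} {P : Measure (Fin d → ℝ)} {ε : ℝ} (h0 : 0 ≤ ε) (h1 : ε ≤ 1) :
    ENNReal.ofReal (1 - ε) • P + ENNReal.ofReal ε • P = P := by
  rw [← add_smul, ← ENNReal.ofReal_add (by linarith) h0]; simp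

/-- Spike amplitudes for which the masked coordinates have variances `lam`. -/
noncomputable def amp {d : ℕ} (p : ℝ) (lam : Fin d → ℝ) : Fin d → ℝ :=
  fun i => Real.sqrt (lam i / (p * (1 - p)))

lemma amp_var {d : ℕ} {p : ℝ} (h0 : 0 < p) (h1 : p < 1) (lam : Fin d → ℝ) (hl : ∀ i, 0 < lam i)
    (σ : Fin d → Bool) (i : Fin d) : sgAmp (amp p lam) σ i ^ 2 * (p * (1 - p)) = lam i := by
  have hp : 0 < p * (1 - p) := mul_pos h0 (by linarith)
  have : sgAmp (amp p lam) σ i ^ 2 = lam i / (p * (1 - p)) := by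
    unfold sgAmp amp
    rw [mul_pow, Real.sq_sqrt (div_nonneg (hl i).le hp.le)]
    cases σ i <;> simp
  rw [this, div_mul_cancel₀ _ hp.ne']

lemma amp_mean {d : ℕ} {p : ℝ} (h0 : 0 < p) (h1 : p < 1) (lam : Fin d → ℝ) (hl : ∀ i, 0 < lam i)
    (i : Fin d) : lam i * p ≤ (amp p lam i * p) ^ 2 := by
  have hp : 0 < p * (1 - p) := mul_pos h0 (by linarith)
  unfold amp
  rw [mul_pow, Real.sq_sqrt (div_nonneg (hl i).le hp.le)]
  have : lam i / (p * (1 - p)) * p ^ 2 = (lam i * p) / (1 - p) := by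
    have : 1 - p ≠ 0 := by linarith
    field_simp
  rw [this, le_div_iff₀ (by linarith)]
  nlinarith [mul_pos (hl i) h0]

/-- Without any contamination, the risk is at least `r` as soon as the unseen coordinates carry squared
mean `r` with probability more than `2δ`. -/
lemma lower_generic {n d : ℕ} {p ε δ r : ℝ} (h0 : 0 < p) (h1 : p < 1) (he0 : 0 ≤ ε) (he1 : ε ≤ 1)
    (u : Fin d → Fin d → ℝ) (lam : Fin d → ℝ) (S : Matrix (Fin d) (Fin d) ℝ)
    (hu : ∀ i j, ∑ k, u i k * u j k = if i = j then 1 else 0)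
    (hS : ∀ k l, S k l = ∑ i, lam i * u i k * u i l) (hl : ∀ i, 0 < lam i)
    (hb : 2 * δ < (Measure.pi fun _ : Fin n => maskM d p).real
        {b | r ≤ ∑ i, if unseen b i then (amp p lam i * p) ^ 2 else 0}) :
    ENNReal.ofReal r ≤ minimaxQuantile (huberClass n d ε S)
      (fun θ₁ θ₂ => ∑ i, (θ₁ i - θ₂ i) ^ 2) δ := by
  refine le_minimaxQuantile _ _ _ _ fun T hT => ?_
  have hpr := maskM_prob (d := d) h0.le h1.le
  obtain ⟨σ, hσ⟩ := exists_sign (n := n) r h0.le h1.le u hu (amp p lam) T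
  have hm := spikeM_mem (n := n) (ε := ε) h0.le h1.le u (sgAmp (amp p lam) σ) lam S hS
    (amp_var h0 h1 lam hl σ) _ (spikeM_prob h0.le h1.le u (sgAmp (amp p lam) σ))
  rw [mix_self he0 he1] at hm
  refine ⟨_, _, hm, ?_⟩
  have e : (Measure.pi fun _ : Fin n => spikeM p u (sgAmp (amp p lam) σ)) =
      (Measure.pi fun _ : Fin n => maskM d p).map
        (fun b j => spike u (sgAmp (amp p lam) σ) (b j)) := by
    have := spikeM_prob h0.le h1.le u (sgAmp (amp p lam) σ)
    have : ∀ i : Fin n, SigmaFinite ((maskM d p).map (spike u (sgAmp (amp p lam) σ))) := by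
      intro i; change SigmaFinite (spikeM p u _); infer_instance
    rw [Measure.pi_map_pi (μ := fun _ : Fin n => maskM d p)
      (f := fun _ => spike u (sgAmp (amp p lam) σ))
      (fun _ => (measurable_of_finite _).aemeasurable)]
    rfl
  rw [e, Measure.map_apply (measurable_of_finite _)
    (measurableSet_lt (Finset.measurable_sum _ fun k _ => by
      have : Measurable fun x => T x k := (measurable_pi_apply k).comp hT
      fun_prop) measurable_const)]
  rw [ENNReal.lt_ofReal_iff_toReal_lt (measure_ne_top _ _)]
  refine lt_of_le_of_lt hσ ?_
  linarith

/-- Union bound for the probability that a given coordinate is seen. -/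
lemma mask_seen_le {n d : ℕ} {p : ℝ} (h0 : 0 ≤ p) (h1 : p ≤ 1) (i : Fin d) :
    ∫ b, (if unseen b i then (0:ℝ) else 1) ∂(Measure.pi fun _ : Fin n => maskM d p) ≤ n * p := by
  have hpr := maskM_prob (d := d) h0 h1
  have key : ∀ b : Fin n → Fin d → Bool, (if unseen b i then (0:ℝ) else 1) ≤
      ∑ j, (if b j i then (1:ℝ) else 0) := by
    intro b
    by_cases h : unseen b i
    · simp only [h, if_true]; exact Finset.sum_nonneg fun j _ => by split_ifs <;> norm_num
    · simp only [unseen, decide_eq_true_eq, not_forall] at h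
      obtain ⟨j, hj⟩ := h
      refine le_trans (b := (1:ℝ)) (by split_ifs <;> norm_num)
        (le_trans (b := if b j i then (1:ℝ) else 0) ?_
          (Finset.single_le_sum (f := fun j => if b j i then (1:ℝ) else 0)
            (fun j _ => by split_ifs <;> norm_num) (Finset.mem_univ j)))
      simp only [Bool.not_eq_false] at hj
      simp [hj]
  refine (integral_mono Integrable.of_finite Integrable.of_finite key).trans ?_
  rw [integral_finsetSum _ (fun _ _ => Integrable.of_finite)]
  have : ∀ j : Fin n, ∫ b, (if b j i then (1:ℝ) else 0) ∂(Measure.pi fun _ : Fin n => maskM d p)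
      = p := by
    intro j
    rw [integral_comp_eval (μ := fun _ : Fin n => maskM d p) (i := j)
      (f := fun c : Fin d → Bool => if c i then (1:ℝ) else 0)
      (Integrable.of_finite.aestronglyMeasurable),
      integral_mask_one h0 h1 (fun c : Bool => if c then (1:ℝ) else 0)]
    simp
  simp [this]

/-- The trace lower bound: with masks of rate `1/(16n)`, most of the squared mean is unseen. -/
lemma lower_trace {n d : ℕ} {ε δ : ℝ} (hn : 0 < n) (he0 : 0 ≤ ε) (he1 : ε ≤ 1) (hδ : δ ≤ 1 / 4)
    (u : Fin d → Fin d → ℝ) (lam : Fin d → ℝ) (S : Matrix (Fin d) (Fin d) ℝ)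
    (hu : ∀ i j, ∑ k, u i k * u j k = if i = j then 1 else 0)
    (hS : ∀ k l, S k l = ∑ i, lam i * u i k * u i l) (hl : ∀ i, 0 < lam i) (hd : 0 < d) :
    ENNReal.ofReal ((∑ i, lam i) / n / 32) ≤ minimaxQuantile (huberClass n d ε S)
      (fun θ₁ θ₂ => ∑ i, (θ₁ i - θ₂ i) ^ 2) δ := by
  classical
  have hn' : (1:ℝ) ≤ n := by exact_mod_cast hn
  set p : ℝ := 1 / (16 * n) with hp
  have h0 : 0 < p := by positivity
  have hnp : n * p = 1 / 16 := by rw [hp]; field_simp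
  have h1 : p < 1 := by nlinarith
  have hpr := maskM_prob (d := d) h0.le h1.le
  have : Nonempty (Fin d) := ⟨⟨0, hd⟩⟩
  -- `m i` is the squared `i`-th coordinate of the mean; at least half of their sum `M` stays unseen
  set m : Fin d → ℝ := fun i => (amp p lam i * p) ^ 2 with hm
  have hm0 : ∀ i, lam i * p ≤ m i := amp_mean h0 h1 lam hl
  have hmp : ∀ i, 0 < m i := fun i => lt_of_lt_of_le (mul_pos (hl i) h0) (hm0 i)
  set M := ∑ i, m i with hM
  have hMp : 0 < M := Finset.sum_pos (fun i _ => hmp i) Finset.univ_nonempty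
  have hr : (∑ i, lam i) / n / 32 ≤ M / 2 := by
    have : ∑ i, lam i * p ≤ M := Finset.sum_le_sum fun i _ => hm0 i
    rw [← Finset.sum_mul] at this
    have e : (∑ i, lam i) / n / 32 = (∑ i, lam i) * p / 2 := by rw [hp]; field_simp; ring
    rw [e]; linarith
  refine (ENNReal.ofReal_le_ofReal hr).trans
    (lower_generic h0 h1 he0 he1 u lam S hu hS hl ?_)
  set μ := Measure.pi fun _ : Fin n => maskM d p
  set B : Set (Fin n → Fin d → Bool) := {b | M / 2 ≤ ∑ i, if unseen b i then m i else 0} with hB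
  change 2 * δ < μ.real B
  have key : ∀ b, M - ∑ i, m i * (if unseen b i then 0 else 1) ≤
      M / 2 + M / 2 * B.indicator (fun _ => (1:ℝ)) b := by
    intro b
    have e : M - ∑ i, m i * (if unseen b i then (0:ℝ) else 1) =
        ∑ i, if unseen b i then m i else 0 := by
      rw [hM, ← Finset.sum_sub_distrib]
      exact Finset.sum_congr rfl fun i _ => by split_ifs <;> ring
    rw [e]
    by_cases hb : b ∈ B
    · simp only [hb, Set.indicator_of_mem]
      have : (∑ i, if unseen b i then m i else 0) ≤ M :=
        Finset.sum_le_sum fun i _ => by split_ifs; exacts [le_rfl, (hmp i).le]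
      linarith
    · simp only [hb, not_false_eq_true, Set.indicator_of_notMem]
      simp only [hB, Set.mem_ofPred_eq, not_le] at hb
      linarith
  have int := integral_mono (μ := μ) Integrable.of_finite Integrable.of_finite key
  have hI : ∫ b, ∑ i, m i * (if unseen b i then (0:ℝ) else 1) ∂μ =
      ∑ i, m i * ∫ b, (if unseen b i then (0:ℝ) else 1) ∂μ := by
    rw [integral_finsetSum _ (fun _ _ => Integrable.of_finite)]
    exact Finset.sum_congr rfl fun i _ => integral_const_mul _ _
  rw [integral_sub Integrable.of_finite Integrable.of_finite,
    integral_add Integrable.of_finite Integrable.of_finite, integral_const_mul, hI,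
    integral_indicator_const _ B.toFinite.measurableSet] at int
  have h3 : ∑ i, m i * ∫ b, (if unseen b i then (0:ℝ) else 1) ∂μ ≤ ∑ i, m i * (1 / 16) := by
    refine Finset.sum_le_sum fun i _ => mul_le_mul_of_nonneg_left ?_ (hmp i).le
    rw [← hnp]; exact mask_seen_le h0.le h1.le i
  rw [← Finset.sum_mul] at h3
  simp only [integral_const, probReal_univ, smul_eq_mul, mul_one, one_mul] at int
  have : M * (7 / 8) ≤ M * μ.real B := by linarith
  have := le_of_mul_le_mul_left this hMp
  linarith

/-- The deviation lower bound: with masks of rate of order `log (1/δ) / n`, a given coordinate is unseen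
with probability at least `δ ^ (1/4)`, which exceeds `2δ`. -/
lemma lower_log {n d : ℕ} {ε δ : ℝ} (hn : 0 < n) (he0 : 0 ≤ ε) (he1 : ε ≤ 1) (hδ : δ ≤ 1 / 4)
    (hδ0 : 0 < δ) (hlog : Real.log (1 / δ) ≤ n)
    (u : Fin d → Fin d → ℝ) (lam : Fin d → ℝ) (S : Matrix (Fin d) (Fin d) ℝ)
    (hu : ∀ i j, ∑ k, u i k * u j k = if i = j then 1 else 0)
    (hS : ∀ k l, S k l = ∑ i, lam i * u i k * u i l) (hl : ∀ i, 0 < lam i) (i0 : Fin d) :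
    ENNReal.ofReal (lam i0 * Real.log (1 / δ) / n / 8) ≤ minimaxQuantile (huberClass n d ε S)
      (fun θ₁ θ₂ => ∑ i, (θ₁ i - θ₂ i) ^ 2) δ := by
  classical
  have hn' : (0:ℝ) < n := by exact_mod_cast hn
  have hlp : 0 < Real.log (1 / δ) := Real.log_pos (by rw [lt_div_iff₀ hδ0]; linarith)
  set p : ℝ := Real.log (1 / δ) / (8 * n) with hp
  have h0 : 0 < p := by positivity
  have h8 : p ≤ 1 / 8 := by rw [hp, div_le_iff₀ (by positivity)]; linarith
  have h1 : p < 1 := by linarith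
  have hpr := maskM_prob (d := d) h0.le h1.le
  have hbp := bernM_prob h0.le h1.le
  have hr : lam i0 * Real.log (1 / δ) / n / 8 = lam i0 * p := by rw [hp]; field_simp
  rw [hr]
  refine lower_generic h0 h1 he0 he1 u lam S hu hS hl ?_
  set μ := Measure.pi fun _ : Fin n => maskM d p
  have sub : (Set.univ.pi fun _ : Fin n => {c : Fin d → Bool | c i0 = false}) ⊆
      {b | lam i0 * p ≤ ∑ i, if unseen b i then (amp p lam i * p) ^ 2 else 0} := by
    intro b hb
    have hb' : unseen b i0 = true := by
      simp only [unseen, decide_eq_true_eq]; intro j; exact hb j trivial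
    refine (amp_mean h0 h1 lam hl i0).trans ?_
    have := Finset.single_le_sum (f := fun i => if unseen b i then (amp p lam i * p) ^ 2 else 0)
      (fun i _ => by split_ifs <;> positivity) (Finset.mem_univ i0)
    simpa [hb'] using this
  refine lt_of_lt_of_le ?_ (measureReal_mono sub)
  have e1 : (maskM d p) {c : Fin d → Bool | c i0 = false} = ENNReal.ofReal (1 - p) := by
    have : {c : Fin d → Bool | c i0 = false} = (fun c => c i0) ⁻¹' {false} := by ext; simp
    rw [this, ← Measure.map_apply (measurable_of_finite _) (measurableSet_singleton _), maskM,
      (measurePreserving_eval (fun _ : Fin d => bernM p) i0).map_eq]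
    simp [bernM]
  rw [measureReal_def, Measure.pi_pi]
  simp only [e1, Finset.prod_const, Finset.card_univ, Fintype.card_fin, ENNReal.toReal_pow]
  rw [ENNReal.toReal_ofReal (by linarith)]
  have h2 : Real.exp (-(2 * p)) ≤ 1 - p := by
    have h := Real.exp_bound_div_one_sub_of_interval (x := 2 * p) (by linarith) (by linarith)
    rw [Real.exp_neg]
    have h5 := Real.quadratic_le_exp_of_nonneg (x := 2 * p) (by linarith)
    rw [inv_le_comm₀ (Real.exp_pos _) (by linarith)]
    refine le_trans ?_ h5
    rw [inv_le_iff_one_le_mul₀ (by linarith)]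
    nlinarith
  have h3 : Real.exp (-(2 * p)) ^ n ≤ (1 - p) ^ n := pow_le_pow_left₀ (Real.exp_pos _).le h2 n
  refine lt_of_lt_of_le ?_ h3
  rw [← Real.exp_nat_mul]
  have e2 : (n:ℝ) * -(2 * p) = Real.log δ / 4 := by
    rw [hp]; rw [one_div, Real.log_inv]; field_simp; ring
  rw [e2]
  have e3 : δ = Real.exp (Real.log δ / 4) ^ 4 := by
    rw [← Real.exp_nat_mul]
    conv_lhs => rw [← Real.exp_log hδ0]
    congr 1; push_cast; ring
  set t := Real.exp (Real.log δ / 4)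
  have ht : 0 < t := Real.exp_pos _
  rw [e3]
  have : 2 * t ^ 3 < 1 := by
    by_contra! hc
    have : (1/4:ℝ) < t ^ 4 := by
      have h6 : (3/4:ℝ) < t := by
        by_contra! h7
        have := pow_le_pow_left₀ ht.le h7 3
        norm_num at this; linarith
      nlinarith [pow_pos ht 3]
    linarith
  nlinarith [pow_pos ht 3]

/-! ### Contamination lower bound -/

/-- Conditioning the mask on its coordinate `i0`. -/
lemma maskM_split {d : ℕ} {p : ℝ} (h0 : 0 ≤ p) (h1 : p ≤ 1) (i0 : Fin d) :
    maskM d p = ENNReal.ofReal (1 - p) • (maskM d p).map (fun b => Function.update b i0 false) +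
      ENNReal.ofReal p • (maskM d p).map (fun b => Function.update b i0 true) := by
  classical
  have hb := bernM_prob h0 h1
  have hm := maskM_prob (d := d) h0 h1
  have key : ∀ (s : Fin d → Set Bool) (c : Bool),
      (maskM d p).map (fun b => Function.update b i0 c) (Set.univ.pi s) =
        (s i0).indicator 1 c * ∏ i ∈ Finset.univ.erase i0, bernM p (s i) := by
    intro s c
    rw [Measure.map_apply (measurable_of_finite _) (Set.toFinite _).measurableSet]
    by_cases hc : c ∈ s i0
    · have : (fun b : Fin d → Bool => Function.update b i0 c) ⁻¹' Set.univ.pi s =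
          Set.univ.pi (Function.update s i0 Set.univ) := by
        ext b
        simp only [Set.mem_preimage, Set.mem_univ_pi]
        refine forall_congr' fun i => ?_
        by_cases h : i = i0
        · subst h; simp [hc]
        · simp [h]
      rw [this, maskM, Measure.pi_pi, ← Finset.mul_prod_erase _ _ (Finset.mem_univ i0)]
      simp only [Function.update_self, measure_univ, one_mul, hc, Set.indicator_of_mem,
        Pi.one_apply]
      refine Finset.prod_congr rfl fun i hi => ?_
      rw [Function.update_of_ne (Finset.ne_of_mem_erase hi)]
    · have : (fun b : Fin d → Bool => Function.update b i0 c) ⁻¹' Set.univ.pi s = ∅ := by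
        ext b
        simp only [Set.mem_preimage, Set.mem_univ_pi, Set.mem_empty_iff_false, iff_false]
        intro h
        exact hc (by simpa using h i0)
      simp [this, hc]
  conv_lhs => unfold maskM
  refine Measure.pi_eq fun s _ => ?_
  rw [Measure.add_apply, Measure.smul_apply, Measure.smul_apply, key, key,
    ← Finset.mul_prod_erase _ _ (Finset.mem_univ i0)]
  generalize (∏ i ∈ Finset.univ.erase i0, bernM p (s i)) = K
  conv_rhs => rw [bernM]
  simp only [Measure.add_apply, Measure.smul_apply, smul_eq_mul,
    Measure.dirac_apply' _ (Set.toFinite _).measurableSet]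
  ring

/-- Once the coordinate `i0` is masked, its sign is irrelevant. -/
lemma spike_update_false {d : ℕ} (u : Fin d → Fin d → ℝ) (α : Fin d → ℝ) (σ : Fin d → Bool)
    (i0 : Fin d) (b : Fin d → Bool) :
    spike u (sgAmp α (flipAt (fun i => decide (i = i0)) σ)) (Function.update b i0 false) =
      spike u (sgAmp α σ) (Function.update b i0 false) := by
  funext k
  unfold spike
  refine Finset.sum_congr rfl fun i _ => ?_
  by_cases h : i = i0
  · subst h; simp
  · simp [sgAmp, flipAt, h]

/-- The contamination lower bound: the contamination can supply the part of one spike law that the law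
with the sign of coordinate `i0` flipped is missing, so that both have the same contaminated version. -/
lemma lower_eps {n d : ℕ} {ε δ : ℝ} (he0 : 0 < ε) (he1 : ε < 1 / 2) (hδ : δ ≤ 1 / 4)
    (u : Fin d → Fin d → ℝ) (lam : Fin d → ℝ) (S : Matrix (Fin d) (Fin d) ℝ)
    (hu : ∀ i j, ∑ k, u i k * u j k = if i = j then 1 else 0)
    (hS : ∀ k l, S k l = ∑ i, lam i * u i k * u i l) (hl : ∀ i, 0 < lam i) (i0 : Fin d) :
    ENNReal.ofReal (lam i0 * ε) ≤ minimaxQuantile (huberClass n d ε S)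
      (fun θ₁ θ₂ => ∑ i, (θ₁ i - θ₂ i) ^ 2) δ := by
  classical
  have h1e : 0 < 1 - ε := by linarith
  -- the contamination must match the mass `(1 - ε) * p` of the spikes along `i0`
  set p : ℝ := ε / (1 - ε) with hp
  have h0 : 0 < p := by positivity
  have h1 : p < 1 := by rw [hp, div_lt_one h1e]; linarith
  have hep : (1 - ε) * p = ε := by rw [hp]; field_simp
  have hpe : ε ≤ p := by nlinarith
  have hpr := maskM_prob (d := d) h0.le h1.le
  set U : Fin d → Bool := fun i => decide (i = i0)
  set σ : Fin d → Bool := fun _ => true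
  set σ' := flipAt U σ with hσ'
  have hσσ : flipAt U σ' = σ := flipAt_invol U σ
  set N : (Fin d → Bool) → Measure (Fin d → ℝ) := fun s =>
    (maskM d p).map (fun b => spike u (sgAmp (amp p lam) s) (Function.update b i0 false)) with hN
  set M : (Fin d → Bool) → Measure (Fin d → ℝ) := fun s =>
    (maskM d p).map (fun b => spike u (sgAmp (amp p lam) s) (Function.update b i0 true)) with hM
  have hMp : ∀ s, IsProbabilityMeasure (M s) := fun s =>
    Measure.isProbabilityMeasure_map (measurable_of_finite _).aemeasurable
  have hNN : N σ' = N σ := by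
    simp only [hN, hσ', U, spike_update_false]
  have dec : ∀ s, spikeM p u (sgAmp (amp p lam) s) =
      ENNReal.ofReal (1 - p) • N s + ENNReal.ofReal p • M s := by
    intro s
    conv_lhs => rw [spikeM, maskM_split h0.le h1.le i0]
    rw [Measure.map_add _ _ (measurable_of_finite _), Measure.map_smul, Measure.map_smul,
      Measure.map_map (measurable_of_finite _) (measurable_of_finite _),
      Measure.map_map (measurable_of_finite _) (measurable_of_finite _)]
    rfl
  -- the two contaminated laws coincide
  have hR : ENNReal.ofReal (1 - ε) • spikeM p u (sgAmp (amp p lam) σ) + ENNReal.ofReal ε • M σ' =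
      ENNReal.ofReal (1 - ε) • spikeM p u (sgAmp (amp p lam) σ') + ENNReal.ofReal ε • M σ := by
    rw [dec, dec, hNN, smul_add, smul_add, smul_smul, smul_smul, smul_smul,
      ← ENNReal.ofReal_mul h1e.le, ← ENNReal.ofReal_mul h1e.le, hep, add_assoc, add_assoc,
      add_comm (ENNReal.ofReal ε • M σ)]
  have mem1 := spikeM_mem (n := n) (ε := ε) h0.le h1.le u (sgAmp (amp p lam) σ) lam S hS
    (amp_var h0 h1 lam hl σ) _ (hMp σ')
  have mem2 := spikeM_mem (n := n) (ε := ε) h0.le h1.le u (sgAmp (amp p lam) σ') lam S hS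
    (amp_var h0 h1 lam hl σ') _ (hMp σ)
  rw [← hR] at mem2
  set R := ENNReal.ofReal (1 - ε) • spikeM p u (sgAmp (amp p lam) σ) + ENNReal.ofReal ε • M σ'
    with hRdef
  have hRp : IsProbabilityMeasure R := by
    have := spikeM_prob h0.le h1.le u (sgAmp (amp p lam) σ)
    constructor
    simp only [hRdef, Measure.add_apply, Measure.smul_apply, measure_univ, smul_eq_mul, mul_one]
    rw [← ENNReal.ofReal_add h1e.le he0.le]; simp
  refine le_minimaxQuantile _ _ _ _ fun T hT => ?_
  by_contra! hc
  have c1 := hc _ _ mem1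
  have c2 := hc _ _ mem2
  have meas : ∀ a : Fin d → ℝ, MeasurableSet {x | ∑ k, (T x k - a k) ^ 2 < lam i0 * ε} :=
    fun a => measurableSet_lt (Finset.measurable_sum _ fun k _ => by
      have : Measurable fun x => T x k := (measurable_pi_apply k).comp hT
      fun_prop) measurable_const
  have hdisj := measure_union (μ := Measure.pi fun _ : Fin n => R)
    (Set.disjoint_left.2 fun x (hx1 : x ∈ {x | ∑ k, (T x k -
        ∑ i, sgAmp (amp p lam) σ i * p * u i k) ^ 2 < lam i0 * ε})
      (hx2 : x ∈ {x | ∑ k, (T x k -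
        ∑ i, sgAmp (amp p lam) σ' i * p * u i k) ^ 2 < lam i0 * ε}) =>
      flip_sep u hu (amp p lam) U σ (by
        simp only [U, decide_eq_true_eq, Finset.sum_ite_eq', Finset.mem_univ, if_true]
        exact (mul_le_mul_of_nonneg_left hpe (hl i0).le).trans (amp_mean h0 h1 lam hl i0))
        (T x) hx1 hx2) (meas _)
  have := (add_le_add c1 c2).trans (hdisj.symm.le.trans prob_le_one)
  rw [← ENNReal.ofReal_add (by linarith) (by linarith), ENNReal.ofReal_le_one] at this
  linarith

/-- The three lower bounds combined. -/
lemma lower_bound {n d : ℕ} {ε δ : ℝ} (hn : 0 < n) (hd : 0 < d) (he0 : 0 ≤ ε) (he1 : ε < 1 / 2)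
    (hδ0 : 0 < δ) (hδ : δ ≤ 1 / 4) (hlog : Real.log (1 / δ) ≤ n)
    (S : Matrix (Fin d) (Fin d) ℝ) (hS : S.PosDef) :
    ENNReal.ofReal (1 / 96 * (S.trace / n + matOpNorm S * ε +
        matOpNorm S * Real.log (1 / δ) / n)) ≤ minimaxQuantile (huberClass n d ε S)
      (fun θ₁ θ₂ => ∑ i, (θ₁ i - θ₂ i) ^ 2) δ := by
  obtain ⟨u, lam, hu, hs, hl, htr, i0, hi0⟩ := exists_spectral hd S hS
  have hn' : (0:ℝ) < n := by exact_mod_cast hn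
  have hlp : 0 < Real.log (1 / δ) := Real.log_pos (by rw [lt_div_iff₀ hδ0]; linarith)
  have b1 := lower_trace (n := n) hn he0 (by linarith) hδ u lam S hu hs hl hd
  have b2 := lower_log (n := n) hn he0 (by linarith) hδ hδ0 hlog u lam S hu hs hl i0
  have b3 : ENNReal.ofReal (lam i0 * ε) ≤ minimaxQuantile (huberClass n d ε S)
      (fun θ₁ θ₂ => ∑ i, (θ₁ i - θ₂ i) ^ 2) δ := by
    rcases he0.eq_or_lt with rfl | he
    · simp
    · exact lower_eps he he1 hδ u lam S hu hs hl i0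
  have a1 : matOpNorm S * ε ≤ lam i0 * ε := mul_le_mul_of_nonneg_right hi0 he0
  have a2 : matOpNorm S * Real.log (1 / δ) / n ≤ lam i0 * Real.log (1 / δ) / n :=
    div_le_div_of_nonneg_right (mul_le_mul_of_nonneg_right hi0 hlp.le) hn'.le
  rw [htr]
  set x := (∑ i, lam i) / n
  set y := lam i0 * Real.log (1 / δ) / n
  have hy : 0 ≤ y := div_nonneg (mul_nonneg (hl i0).le hlp.le) hn'.le
  have hz : 0 ≤ lam i0 * ε := mul_nonneg (hl i0).le he0
  have : 1 / 96 * (x + matOpNorm S * ε + matOpNorm S * Real.log (1 / δ) / n) ≤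
      max (max (x / 32) (y / 8)) (lam i0 * ε) := by
    have h1 := (le_max_left (x / 32) (y / 8)).trans (le_max_left _ (lam i0 * ε))
    have h2 := (le_max_right (x / 32) (y / 8)).trans (le_max_left _ (lam i0 * ε))
    have h3 := le_max_right (max (x / 32) (y / 8)) (lam i0 * ε)
    linarith
  refine (ENNReal.ofReal_le_ofReal this).trans ?_
  rcases le_total (max (x / 32) (y / 8)) (lam i0 * ε) with h | h
  · rwa [max_eq_right h]
  · rw [max_eq_left h]
    rcases le_total (x / 32) (y / 8) with h | h
    · rwa [max_eq_right h]
    · rwa [max_eq_left h]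

/-! ### Blocks, operator norm and Gaussian smoothing -/

/-- Transporting an i.i.d. sample along an injection of the index set. -/
lemma pi_map_inj {ι κ X : Type*} [Fintype ι] [Fintype κ] [MeasurableSpace X] (R : Measure X)
    [IsProbabilityMeasure R] (g : κ → ι) (hg : Function.Injective g) :
    (Measure.pi fun _ : ι => R).map (fun x j => x (g j)) = Measure.pi fun _ : κ => R := by
  classical
  refine (Measure.pi_eq fun s hs => ?_).symm
  rw [Measure.map_apply (by fun_prop) (MeasurableSet.univ_pi hs)]
  have : (fun (x : ι → X) j => x (g j)) ⁻¹' Set.univ.pi s =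
      Set.univ.pi (fun i => ⋂ j, ⋂ (_ : g j = i), s j) := by
    ext x
    simp only [Set.mem_preimage, Set.mem_univ_pi, Set.mem_iInter]
    exact ⟨fun h i j hj => hj ▸ h j, fun h j => h (g j) j rfl⟩
  rw [this, Measure.pi_pi, ← Finset.prod_subset (Finset.subset_univ (Finset.univ.image g)),
    Finset.prod_image fun a _ b _ h => hg h]
  · refine Finset.prod_congr rfl fun j _ => ?_
    congr 1
    ext y
    simp only [Set.mem_iInter]
    exact ⟨fun h => h j rfl, fun h j' hj' => hg hj' ▸ h⟩
  · intro i _ hi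
    have : ⋂ j, ⋂ (_ : g j = i), s j = Set.univ := by
      ext y
      simp only [Set.mem_iInter, Set.mem_univ, iff_true]
      exact fun j hj => absurd (Finset.mem_image.2 ⟨j, Finset.mem_univ _, hj⟩) hi
    rw [this, measure_univ]

/-- Cutting an i.i.d. sample of size `n` into `k` independent blocks of size `m`. -/
lemma pi_map_blocks {X : Type*} [MeasurableSpace X] (R : Measure X) [IsProbabilityMeasure R]
    {n k m : ℕ} (h : k * m ≤ n) :
    (Measure.pi fun _ : Fin n => R).map
      (fun x (j : Fin k) (l : Fin m) => x (Fin.castLE h (finProdFinEquiv (j, l)))) =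
    Measure.pi fun _ : Fin k => Measure.pi fun _ : Fin m => R := by
  have h1 := pi_map_inj R (fun q : Fin k × Fin m => Fin.castLE h (finProdFinEquiv q))
    ((Fin.castLE_injective h).comp finProdFinEquiv.injective)
  have h2 := Measure.infinitePi_map_curry (fun (_ : Fin k) (_ : Fin m) => R)
  simp only [Measure.infinitePi_eq_pi] at h2
  rw [← h2, ← h1, Measure.map_map (by fun_prop) (by fun_prop)]
  rfl

lemma matOpNorm_nonneg {d : ℕ} (S : Matrix (Fin d) (Fin d) ℝ) : 0 ≤ matOpNorm S :=
  Real.sSup_nonneg (by rintro t ⟨v, -, rfl⟩; exact Real.sqrt_nonneg _)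

/-- The quadratic form of `S` is bounded through the operator norm. -/
lemma quad_le {d : ℕ} (S : Matrix (Fin d) (Fin d) ℝ) (v : Fin d → ℝ) :
    ∑ i, v i * S.mulVec v i ≤ matOpNorm S * ∑ i, v i ^ 2 := by
  have hbdd : BddAbove {t : ℝ | ∃ v : Fin d → ℝ, ∑ j, v j ^ 2 ≤ 1 ∧
      t = Real.sqrt (∑ i, (S.mulVec v i) ^ 2)} := by
    refine ⟨Real.sqrt (∑ i, ∑ j, S i j ^ 2), ?_⟩
    rintro t ⟨w, hw, rfl⟩
    refine Real.sqrt_le_sqrt (Finset.sum_le_sum fun i _ => ?_)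
    have := Finset.sum_mul_sq_le_sq_mul_sq Finset.univ (fun j => S i j) w
    refine this.trans ?_
    have h0 : 0 ≤ ∑ j, S i j ^ 2 := Finset.sum_nonneg fun _ _ => sq_nonneg _
    nlinarith
  set q := ∑ i, v i ^ 2 with hq
  have hq0 : 0 ≤ q := Finset.sum_nonneg fun _ _ => sq_nonneg _
  rcases hq0.eq_or_lt with h | h
  · have : ∀ i, v i = 0 := by
      intro i
      have := (Finset.sum_eq_zero_iff_of_nonneg (fun i _ => sq_nonneg (v i))).1 h.symm i
        (Finset.mem_univ i)
      exact pow_eq_zero_iff (two_ne_zero) |>.1 this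
    simp [this, ← h]
  set s := Real.sqrt q with hs
  have hs0 : 0 < s := Real.sqrt_pos.2 h
  have hss : s ^ 2 = q := Real.sq_sqrt hq0
  have h1 : Real.sqrt (∑ i, (S.mulVec (s⁻¹ • v) i) ^ 2) ≤ matOpNorm S := by
    refine le_csSup hbdd ⟨s⁻¹ • v, ?_, rfl⟩
    simp only [Pi.smul_apply, smul_eq_mul, mul_pow, ← Finset.mul_sum]
    rw [← hq, ← hss]; field_simp; rfl
  have h2 : ∑ i, (S.mulVec (s⁻¹ • v) i) ^ 2 = (∑ i, (S.mulVec v i) ^ 2) / q := by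
    rw [Matrix.mulVec_smul]
    simp only [Pi.smul_apply, smul_eq_mul, mul_pow, ← Finset.mul_sum]
    rw [← hss]; field_simp
  rw [h2, Real.sqrt_le_left (matOpNorm_nonneg S), div_le_iff₀ h] at h1
  have h3 := Finset.sum_mul_sq_le_sq_mul_sq Finset.univ v (S.mulVec v)
  refine abs_le_of_sq_le_sq' (h3.trans ?_) (mul_nonneg (matOpNorm_nonneg S) hq0) |>.2
  nlinarith

/-- Isotropic Gaussian with mean `v` and coordinate variance `w`. -/
noncomputable def gaussV {d : ℕ} (w : NNReal) (v : Fin d → ℝ) : Measure (Fin d → ℝ) :=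
  Measure.pi fun i => gaussianReal (v i) w

lemma gaussV_prob {d : ℕ} (w : NNReal) (v : Fin d → ℝ) : IsProbabilityMeasure (gaussV w v) := by
  unfold gaussV; infer_instance

/-- Density of the centred Gaussian with respect to the one centred at `v`. -/
lemma gaussV_shift {d : ℕ} {w : NNReal} (hw : w ≠ 0) (v : Fin d → ℝ) :
    gaussV w (0 : Fin d → ℝ) = (gaussV w v).withDensity
      (fun u => ENNReal.ofReal (Real.exp (-∑ i, (u i * v i - v i ^ 2 / 2) / w))) := by
  have hw' : (w:ℝ) ≠ 0 := by exact_mod_cast hw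
  have hp := gaussV_prob w v
  refine Measure.pi_eq fun s hs => ?_
  rw [withDensity_apply _ (MeasurableSet.univ_pi hs), ← lintegral_indicator (MeasurableSet.univ_pi hs)]
  set F : Fin d → ℝ → ℝ≥0∞ := fun i =>
    (s i).indicator fun y => ENNReal.ofReal (Real.exp (-((y * v i - v i ^ 2 / 2) / w))) with hF
  have hFm : ∀ i, Measurable (F i) := fun i => Measurable.indicator (by fun_prop) (hs i)
  have e : ∀ u : Fin d → ℝ, (Set.univ.pi s).indicator (fun u : Fin d → ℝ =>
      ENNReal.ofReal (Real.exp (-∑ i, (u i * v i - v i ^ 2 / 2) / w))) u = ∏ i, F i (u i) := by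
    intro u
    by_cases hu : u ∈ Set.univ.pi s
    · rw [Set.indicator_of_mem hu, ← Finset.sum_neg_distrib, Real.exp_sum,
        ENNReal.ofReal_prod_of_nonneg fun _ _ => (Real.exp_pos _).le]
      refine Finset.prod_congr rfl fun i _ => ?_
      simp only [hF]; rw [Set.indicator_of_mem (hu i trivial)]
    · rw [Set.indicator_of_notMem hu]
      simp only [Set.mem_univ_pi, not_forall] at hu
      obtain ⟨i, hi⟩ := hu
      exact (Finset.prod_eq_zero (Finset.mem_univ i) (by simp [hF, hi])).symm
  simp_rw [e]
  have hI : iIndepFun (fun i (u : Fin d → ℝ) => F i (u i)) (gaussV w v) :=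
    iIndepFun_pi (μ := fun i => gaussianReal (v i) w) (X := F) fun i => (hFm i).aemeasurable
  rw [lintegral_prod_eq_prod_lintegral_of_indepFun _ _ hI
    fun i => (hFm i).comp (measurable_pi_apply i)]
  refine Finset.prod_congr rfl fun i _ => ?_
  have h1 : ∫⁻ u, F i (u i) ∂(gaussV w v) = ∫⁻ y, F i y ∂(gaussianReal (v i) w) := by
    have := (measurePreserving_eval (fun i => gaussianReal (v i) w) i).lintegral_comp (hFm i)
    exact this
  rw [h1]
  simp only [hF, Pi.zero_apply]
  rw [lintegral_indicator (hs i), gaussianReal_apply _ hw, gaussianReal_of_var_ne_zero _ hw,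
    restrict_withDensity (hs i), lintegral_withDensity_eq_lintegral_mul _
      (measurable_gaussianPDF _ _) (by fun_prop)]
  refine lintegral_congr fun y => ?_
  simp only [Pi.mul_apply, gaussianPDF, gaussianPDFReal]
  rw [← ENNReal.ofReal_mul (by positivity), mul_assoc, ← Real.exp_add]
  congr 3
  field_simp
  ring

/-- The Donsker–Varadhan inequality for the pair `gaussV w v`, `gaussV w 0`, whose relative entropy is
`|v|² / (2w)`. -/
lemma gaussV_pac {d : ℕ} {w : NNReal} (hw : w ≠ 0) (v : Fin d → ℝ) (G : (Fin d → ℝ) → ℝ)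
    (hG : Measurable G) (hGi : Integrable G (gaussV w v)) :
    ENNReal.ofReal (Real.exp (∫ u, G u ∂(gaussV w v) - (∑ i, v i ^ 2) / (2 * w))) ≤
      ∫⁻ u, ENNReal.ofReal (Real.exp (G u)) ∂(gaussV w (0 : Fin d → ℝ)) := by
  have hw' : (w:ℝ) ≠ 0 := by exact_mod_cast hw
  have hp := gaussV_prob w v
  -- `l` is the log-density of `gaussV w v` with respect to `gaussV w 0`
  set l : (Fin d → ℝ) → ℝ := fun u => ∑ i, (u i * v i - v i ^ 2 / 2) / w with hl
  have hid : ∀ i, Integrable (fun u : Fin d → ℝ => u i) (gaussV w v) := fun i =>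
    integrable_comp_eval (μ := fun i => gaussianReal (v i) w) (f := fun y : ℝ => y)
      ((memLp_id_gaussianReal 1).integrable le_rfl)
  have hmean : ∀ i, ∫ u : Fin d → ℝ, u i ∂(gaussV w v) = v i := fun i => by
    have := integral_comp_eval (μ := fun i => gaussianReal (v i) w) (i := i)
      (f := fun y : ℝ => y) (by fun_prop)
    exact this.trans integral_id_gaussianReal
  have hli0 : ∀ i, Integrable (fun u : Fin d → ℝ => (u i * v i - v i ^ 2 / 2) / w) (gaussV w v) :=
    fun i => (((hid i).mul_const _).sub (integrable_const _)).div_const _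
  have hli : Integrable l (gaussV w v) := integrable_finsetSum _ fun i _ => hli0 i
  have hlm : ∫ u, l u ∂(gaussV w v) = (∑ i, v i ^ 2) / (2 * w) := by
    simp only [hl]
    rw [integral_finsetSum _ fun i _ => hli0 i, Finset.sum_div]
    refine Finset.sum_congr rfl fun i _ => ?_
    rw [integral_div, integral_sub ((hid i).mul_const _) (integrable_const _), integral_mul_const,
      hmean]
    simp
    field_simp
    ring
  rw [gaussV_shift hw v, lintegral_withDensity_eq_lintegral_mul _ (by fun_prop) (by fun_prop)]
  set a := ∫ u, G u ∂(gaussV w v) - (∑ i, v i ^ 2) / (2 * w) with ha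
  have hH : Integrable (fun u => Real.exp a * (1 + (G u - l u - a))) (gaussV w v) :=
    ((integrable_const _).add ((hGi.sub hli).sub (integrable_const _))).const_mul _
  have hHi : ∫ u, Real.exp a * (1 + (G u - l u - a)) ∂(gaussV w v) = Real.exp a := by
    have hGl : Integrable (fun u => G u - l u) (gaussV w v) := hGi.sub hli
    have hGla : Integrable (fun u => G u - l u - a) (gaussV w v) := hGl.sub (integrable_const _)
    rw [integral_const_mul, integral_add (integrable_const _) hGla,
      integral_sub hGl (integrable_const _), integral_sub hGi hli, hlm]
    simp [ha]
  -- Jensen's inequality, through the tangent line of `exp` at the mean `a` of `G - l`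
  calc ENNReal.ofReal (Real.exp a)
      = ENNReal.ofReal (∫ u, Real.exp a * (1 + (G u - l u - a)) ∂(gaussV w v)) := by rw [hHi]
    _ ≤ ∫⁻ u, ENNReal.ofReal (Real.exp a * (1 + (G u - l u - a))) ∂(gaussV w v) := by
        rw [integral_eq_lintegral_pos_part_sub_lintegral_neg_part hH]
        exact (ENNReal.ofReal_le_ofReal (sub_le_self _ ENNReal.toReal_nonneg)).trans
          ENNReal.ofReal_toReal_le
    _ ≤ _ := by
        refine lintegral_mono fun u => ?_
        simp only [Pi.mul_apply]
        rw [← ENNReal.ofReal_mul (Real.exp_pos _).le, ← Real.exp_add]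
        refine ENNReal.ofReal_le_ofReal ?_
        have h1 := Real.add_one_le_exp (G u - l u - a)
        have h2 : -∑ i, (u i * v i - v i ^ 2 / 2) / w + G u = a + (G u - l u - a) := by
          simp only [hl]; ring
        rw [h2, Real.exp_add]
        refine mul_le_mul_of_nonneg_left (by linarith) (Real.exp_pos _).le

/-- Expectation of a quadratic form under the Gaussian. -/
lemma gaussV_quad {d : ℕ} (w : NNReal) (v : Fin d → ℝ) (S : Matrix (Fin d) (Fin d) ℝ) :
    Integrable (fun u => ∑ i, u i * S.mulVec u i) (gaussV w v) ∧
    ∫ u, ∑ i, u i * S.mulVec u i ∂(gaussV w v) =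
      (∑ i, v i * S.mulVec v i) + w * S.trace := by
  have hp := gaussV_prob w v
  have hL : ∀ i, MemLp (fun u : Fin d → ℝ => u i) 2 (gaussV w v) := fun i =>
    (memLp_id_gaussianReal 2).comp_measurePreserving
      (measurePreserving_eval (fun i => gaussianReal (v i) w) i)
  have hmean : ∀ i, ∫ u : Fin d → ℝ, u i ∂(gaussV w v) = v i := fun i => by
    have := integral_comp_eval (μ := fun i => gaussianReal (v i) w) (i := i)
      (f := fun y : ℝ => y) (by fun_prop)
    exact this.trans integral_id_gaussianReal
  have hint : ∀ i j, Integrable (fun u : Fin d → ℝ => u i * u j) (gaussV w v) := fun i j =>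
    (hL i).integrable_mul (hL j)
  have hind : iIndepFun (fun i (u : Fin d → ℝ) => u i) (gaussV w v) :=
    iIndepFun_pi (μ := fun i => gaussianReal (v i) w) (X := fun _ y => y) fun i => by fun_prop
  have h2 : ∀ i j, ∫ u : Fin d → ℝ, u i * u j ∂(gaussV w v) =
      v i * v j + if i = j then (w:ℝ) else 0 := by
    intro i j
    by_cases h : i = j
    · subst h
      have e1 := integral_comp_eval (μ := fun i => gaussianReal (v i) w) (i := i)
        (f := fun y : ℝ => y * y) (by fun_prop)
      have e2 := variance_eq_sub (memLp_id_gaussianReal (μ := v i) (v := w) 2)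
      rw [variance_id_gaussianReal] at e2
      have e3 : ∫ y, y ∂(gaussianReal (v i) w) = v i := integral_id_gaussianReal
      simp only [Pi.pow_apply, id_eq, e3] at e2
      refine e1.trans ?_
      simp only [if_true, e2, sq]
      ring
    · rw [(hind.indepFun h).integral_fun_mul_eq_mul_integral (hL i).1 (hL j).1, hmean, hmean]
      simp [h]
  have e : ∀ u : Fin d → ℝ, ∑ i, u i * S.mulVec u i = ∑ i, ∑ j, S i j * (u i * u j) := by
    intro u
    refine Finset.sum_congr rfl fun i _ => ?_
    simp only [Matrix.mulVec, dotProduct, Finset.mul_sum]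
    exact Finset.sum_congr rfl fun j _ => by ring
  simp_rw [e]
  have hc : ∀ i j, Integrable (fun u : Fin d → ℝ => S i j * (u i * u j)) (gaussV w v) :=
    fun i j => (hint i j).const_mul _
  have hr : ∀ i, Integrable (fun u : Fin d → ℝ => ∑ j, S i j * (u i * u j)) (gaussV w v) :=
    fun i => integrable_finsetSum _ fun j _ => hc i j
  refine ⟨integrable_finsetSum _ fun i _ => hr i, ?_⟩
  have hin : ∀ i, ∫ u : Fin d → ℝ, ∑ j, S i j * (u i * u j) ∂(gaussV w v) =
      ∑ j, S i j * (v i * v j + if i = j then (w:ℝ) else 0) := by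
    intro i
    rw [integral_finsetSum _ fun j _ => hc i j]
    exact Finset.sum_congr rfl fun j _ => by rw [integral_const_mul, h2]
  rw [integral_finsetSum _ fun i _ => hr i]
  simp_rw [hin, mul_add, Finset.sum_add_distrib]
  congr 1
  simp [Matrix.trace, Finset.mul_sum, mul_comm]

/-- By symmetry about `v`, a Gaussian point satisfies `⟪y, u⟫² > ρ` with probability at least one
half as soon as its mean does. -/
lemma gaussV_half {d : ℕ} (w : NNReal) (v y : Fin d → ℝ) (ρ : ℝ)
    (h : ρ < (∑ i, y i * v i) ^ 2) :
    1 / 2 ≤ (gaussV w v).real {u | ρ < (∑ i, y i * u i) ^ 2} := by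
  have hp := gaussV_prob w v
  set A := {u : Fin d → ℝ | ρ < (∑ i, y i * u i) ^ 2} with hA
  have hAm : MeasurableSet A := measurableSet_lt measurable_const (by fun_prop)
  have hmap : (gaussV w v).map (fun u i => 2 * v i - u i) = gaussV w v := by
    have hs : ∀ i, (gaussianReal (v i) w).map (fun y => 2 * v i - y) = gaussianReal (v i) w := by
      intro i
      rw [gaussianReal_map_const_sub]; congr 1; ring
    have : ∀ i, SigmaFinite ((gaussianReal (v i) w).map (fun y => 2 * v i - y)) := by
      intro i; rw [hs]; infer_instance
    unfold gaussV
    rw [Measure.pi_map_pi (f := fun i (y : ℝ) => 2 * v i - y) fun i => by fun_prop]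
    simp_rw [hs]
  have hcov : Set.univ ⊆ A ∪ (fun (u : Fin d → ℝ) i => 2 * v i - u i) ⁻¹' A := by
    intro u _
    by_contra hc
    simp only [hA, Set.mem_union, Set.mem_preimage, Set.mem_ofPred_eq, not_or, not_lt] at hc
    obtain ⟨h1, h2⟩ := hc
    have e : ∑ i, y i * (2 * v i - u i) = 2 * (∑ i, y i * v i) - ∑ i, y i * u i := by
      rw [Finset.mul_sum, ← Finset.sum_sub_distrib]
      exact Finset.sum_congr rfl fun i _ => by ring
    rw [e] at h2
    nlinarith [sq_nonneg (2 * (∑ i, y i * v i) - ∑ i, y i * u i - ∑ i, y i * u i)]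
  have h1 : (gaussV w v).real ((fun (u : Fin d → ℝ) i => 2 * v i - u i) ⁻¹' A) =
      (gaussV w v).real A := by
    conv_rhs => rw [← hmap]
    rw [measureReal_def, measureReal_def, Measure.map_apply (by fun_prop) hAm]
  have h2 := measureReal_mono (μ := gaussV w v) hcov
  have h3 := measureReal_union_le (μ := gaussV w v) A
    ((fun (u : Fin d → ℝ) i => 2 * v i - u i) ⁻¹' A)
  rw [probReal_univ] at h2
  linarith

/-! ### Uniform control of the number of bad blocks -/

/-- The deviation from `θ` of the mean of the block `y`. -/
noncomputable def blockDev {m d : ℕ} (θ : Fin d → ℝ) (y : Fin m → Fin d → ℝ) : Fin d → ℝ :=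
  fun i => (∑ l, y l i) / m - θ i

/-- The law of a contaminated block dominates `(1-ε)^m` times the law of a clean block. -/
lemma pi_mix_ge {m d : ℕ} {ε : ℝ} (h1 : ε ≤ 1) (P R : Measure (Fin d → ℝ))
    [IsProbabilityMeasure P] [IsProbabilityMeasure R] (hR : ENNReal.ofReal (1 - ε) • P ≤ R)
    (A : Set (Fin m → Fin d → ℝ)) (hA : MeasurableSet A) :
    ENNReal.ofReal ((1 - ε) ^ m) * (Measure.pi fun _ : Fin m => P) A ≤
      (Measure.pi fun _ : Fin m => R) A := by
  -- both sides are compared on boxes, where they are products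
  have key : (ENNReal.ofReal ((1 - ε) ^ m) • Measure.pi fun _ : Fin m => P).toOuterMeasure ≤
      OuterMeasure.pi fun _ : Fin m => R.toOuterMeasure := by
    rw [OuterMeasure.le_pi]
    intro s _
    change (ENNReal.ofReal ((1 - ε) ^ m) • Measure.pi fun _ : Fin m => P) (Set.univ.pi s) ≤
      ∏ i, R (s i)
    rw [Measure.smul_apply, Measure.pi_pi, smul_eq_mul, ENNReal.ofReal_pow (by linarith)]
    have : ENNReal.ofReal (1 - ε) ^ m * ∏ i, P (s i) = ∏ i, (ENNReal.ofReal (1 - ε) * P (s i)) := by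
      rw [Finset.prod_mul_distrib]; simp
    rw [this]
    exact Finset.prod_le_prod' fun i _ => hR (s i)
  have := key A
  have e : (Measure.pi fun _ : Fin m => R) A = (OuterMeasure.pi fun _ => R.toOuterMeasure) A := by
    rw [Measure.pi, toMeasure_apply _ _ hA]
  rw [e]
  exact this

/-- Chebyshev's inequality for the mean of a clean block. -/
lemma block_clean {m d : ℕ} (hm : 0 < m) {ρ : ℝ} (hρ : 0 < ρ) (P : Measure (Fin d → ℝ))
    [IsProbabilityMeasure P] (θ : Fin d → ℝ) (S : Matrix (Fin d) (Fin d) ℝ)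
    (hmean : ∀ i, Integrable (fun x => x i) P ∧ (∫ x, x i ∂P) = θ i)
    (hcov : ∀ i j, Integrable (fun x => (x i - θ i) * (x j - θ j)) P ∧
      (∫ x, (x i - θ i) * (x j - θ j) ∂P) = S i j) (u : Fin d → ℝ) :
    (Measure.pi fun _ : Fin m => P).real {y | ρ < (∑ i, blockDev θ y i * u i) ^ 2} ≤
      (∑ i, u i * S.mulVec u i) / (m * ρ) := by
  have hm' : (0:ℝ) < m := by exact_mod_cast hm
  set X : (Fin d → ℝ) → ℝ := fun z => ∑ i, (z i - θ i) * u i with hX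
  have hXm : Measurable X := by fun_prop
  have hi : ∀ i, Integrable (fun z : Fin d → ℝ => (z i - θ i) * u i) P := fun i =>
    ((hmean i).1.sub (integrable_const _)).mul_const _
  have hX1 : Integrable X P := integrable_finsetSum _ fun i _ => hi i
  have hXe : ∫ z, X z ∂P = 0 := by
    simp only [hX]
    rw [integral_finsetSum _ fun i _ => hi i]
    refine Finset.sum_eq_zero fun i _ => ?_
    rw [integral_mul_const, integral_sub (hmean i).1 (integrable_const _), (hmean i).2]
    simp
  have hsq : ∀ z, X z ^ 2 = ∑ i, ∑ j, u i * u j * ((z i - θ i) * (z j - θ j)) := by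
    intro z
    simp only [hX]
    rw [sq, Finset.sum_mul_sum]
    exact Finset.sum_congr rfl fun i _ => Finset.sum_congr rfl fun j _ => by ring
  have hc : ∀ i j, Integrable (fun z : Fin d → ℝ => u i * u j * ((z i - θ i) * (z j - θ j))) P :=
    fun i j => (hcov i j).1.const_mul _
  have hr : ∀ i, Integrable
      (fun z : Fin d → ℝ => ∑ j, u i * u j * ((z i - θ i) * (z j - θ j))) P :=
    fun i => integrable_finsetSum _ fun j _ => hc i j
  have hX2 : MemLp X 2 P := by
    rw [memLp_two_iff_integrable_sq hXm.aestronglyMeasurable]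
    simp_rw [hsq]
    exact integrable_finsetSum _ fun i _ => hr i
  have hvar : Var[X; P] = ∑ i, u i * S.mulVec u i := by
    rw [variance_of_integral_eq_zero hXm.aemeasurable hXe]
    simp_rw [hsq]
    rw [integral_finsetSum _ fun i _ => hr i]
    refine Finset.sum_congr rfl fun i _ => ?_
    rw [integral_finsetSum _ fun j _ => hc i j]
    simp only [Matrix.mulVec, dotProduct, Finset.mul_sum]
    refine Finset.sum_congr rfl fun j _ => ?_
    rw [integral_const_mul, (hcov i j).2]; ring
  set F : (Fin m → Fin d → ℝ) → ℝ := ∑ l, fun y => X (y l) with hF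
  have hFv : Var[F; Measure.pi fun _ : Fin m => P] = m * ∑ i, u i * S.mulVec u i := by
    rw [hF, variance_sum_pi (μ := fun _ : Fin m => P) (X := fun _ => X) fun _ => hX2]
    simp [hvar]
  have hF2 : MemLp F 2 (Measure.pi fun _ : Fin m => P) :=
    memLp_finsetSum' _ fun l _ =>
      hX2.comp_measurePreserving (measurePreserving_eval (fun _ : Fin m => P) l)
  have hFe : ∫ y, F y ∂(Measure.pi fun _ : Fin m => P) = 0 := by
    simp only [hF, Finset.sum_apply]
    rw [integral_finsetSum _ fun l _ =>
      integrable_comp_eval (μ := fun _ : Fin m => P) (i := l) hX1]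
    refine Finset.sum_eq_zero fun l _ => ?_
    rw [integral_comp_eval (μ := fun _ : Fin m => P) (i := l) hX1.1, hXe]
  have hdev : ∀ y : Fin m → Fin d → ℝ, ∑ i, blockDev θ y i * u i = F y / m := by
    intro y
    simp only [hF, Finset.sum_apply, hX, blockDev]
    rw [Finset.sum_comm, Finset.sum_div]
    refine Finset.sum_congr rfl fun i _ => ?_
    rw [← Finset.sum_mul, Finset.sum_sub_distrib]
    simp
    field_simp
  have hs : 0 < m * Real.sqrt ρ := mul_pos hm' (Real.sqrt_pos.2 hρ)
  have sub : {y : Fin m → Fin d → ℝ | ρ < (∑ i, blockDev θ y i * u i) ^ 2} ⊆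
      {y | m * Real.sqrt ρ ≤ |F y - ∫ y, F y ∂(Measure.pi fun _ : Fin m => P)|} := by
    intro y hy
    simp only [Set.mem_ofPred_eq, hdev, hFe, sub_zero] at hy ⊢
    have : Real.sqrt ρ ≤ |F y / m| := by
      rw [← Real.sqrt_sq_eq_abs]; exact Real.sqrt_le_sqrt hy.le
    rw [abs_div, abs_of_pos hm', le_div_iff₀ hm'] at this
    linarith
  refine (measureReal_mono sub).trans ?_
  have h := meas_ge_le_variance_div_sq hF2 hs
  rw [measureReal_def]
  refine (ENNReal.toReal_mono ENNReal.ofReal_ne_top h).trans ?_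
  rw [ENNReal.toReal_ofReal (div_nonneg (variance_nonneg _ _) (sq_nonneg _)), hFv, mul_pow,
    Real.sq_sqrt hρ.le]
  refine le_of_eq ?_
  field_simp

lemma block_bad_meas {m d : ℕ} (θ : Fin d → ℝ) (ρ : ℝ) (u : Fin d → ℝ) :
    MeasurableSet {y : Fin m → Fin d → ℝ | ρ < (∑ i, blockDev θ y i * u i) ^ 2} := by
  unfold blockDev
  exact measurableSet_lt measurable_const (by fun_prop)

/-- Chebyshev's inequality for a contaminated block, at the extra cost `ε * m` for the presence of an
outlier. -/
lemma block_bad {m d : ℕ} (hm : 0 < m) {ρ ε : ℝ} (hρ : 0 < ρ) (h0 : 0 ≤ ε) (h1 : ε ≤ 1)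
    (P R : Measure (Fin d → ℝ)) [IsProbabilityMeasure P] [IsProbabilityMeasure R]
    (hR : ENNReal.ofReal (1 - ε) • P ≤ R) (θ : Fin d → ℝ) (S : Matrix (Fin d) (Fin d) ℝ)
    (hmean : ∀ i, Integrable (fun x => x i) P ∧ (∫ x, x i ∂P) = θ i)
    (hcov : ∀ i j, Integrable (fun x => (x i - θ i) * (x j - θ j)) P ∧
      (∫ x, (x i - θ i) * (x j - θ j) ∂P) = S i j) (u : Fin d → ℝ) :
    (Measure.pi fun _ : Fin m => R).real {y | ρ < (∑ i, blockDev θ y i * u i) ^ 2} ≤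
      ε * m + (∑ i, u i * S.mulVec u i) / (m * ρ) := by
  set B := {y : Fin m → Fin d → ℝ | ρ < (∑ i, blockDev θ y i * u i) ^ 2} with hB
  have hBm : MeasurableSet B := block_bad_meas θ ρ u
  have c := block_clean hm hρ P θ S hmean hcov u
  rw [← hB] at c
  set η := (∑ i, u i * S.mulVec u i) / (m * ρ)
  have hη : 0 ≤ η := measureReal_nonneg.trans c
  have hεm : 0 ≤ ε * m := by positivity
  have hB1 : (Measure.pi fun _ : Fin m => R).real B ≤ 1 := measureReal_le_one
  rcases le_total 1 (ε * m) with h | h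
  · linarith
  rcases le_total 1 η with h' | h'
  · linarith
  have g := ENNReal.toReal_mono (measure_ne_top _ _) (pi_mix_ge h1 P R hR Bᶜ hBm.compl)
  rw [ENNReal.toReal_mul, ENNReal.toReal_ofReal (pow_nonneg (by linarith) _)] at g
  change (1 - ε) ^ m * (Measure.pi fun _ : Fin m => P).real Bᶜ ≤
    (Measure.pi fun _ : Fin m => R).real Bᶜ at g
  rw [probReal_compl_eq_one_sub hBm, probReal_compl_eq_one_sub hBm] at g
  have hb := one_add_mul_le_pow (a := -ε) (by linarith) m
  have e : 1 + (m:ℝ) * -ε = 1 - ε * m := by ring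
  rw [e, ← sub_eq_add_neg] at hb
  have : (1 - ε * m) * (1 - η) ≤ (1 - ε) ^ m * (1 - (Measure.pi fun _ : Fin m => P).real B) :=
    mul_le_mul hb (by linarith) (by linarith) (pow_nonneg (by linarith) _)
  nlinarith [mul_nonneg hεm hη]

/-- Number of blocks whose deviation in direction `u` exceeds `√ρ`. -/
noncomputable def numBad {k d : ℕ} (Y : Fin k → Fin d → ℝ) (ρ : ℝ) (u : Fin d → ℝ) : ℝ :=
  ∑ j, {u : Fin d → ℝ | ρ < (∑ i, Y j i * u i) ^ 2}.indicator (fun _ => (1:ℝ)) u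

lemma numBad_meas {k m d : ℕ} (θ : Fin d → ℝ) (ρ : ℝ) :
    Measurable fun q : (Fin k → Fin m → Fin d → ℝ) × (Fin d → ℝ) =>
      numBad (fun j => blockDev θ (q.1 j)) ρ q.2 := by
  unfold numBad
  refine Finset.measurable_sum _ fun j _ => ?_
  have : MeasurableSet {q : (Fin k → Fin m → Fin d → ℝ) × (Fin d → ℝ) |
      ρ < (∑ i, blockDev θ (q.1 j) i * q.2 i) ^ 2} := by
    unfold blockDev
    exact measurableSet_lt measurable_const (by fun_prop)
  exact (measurable_const (a := (1:ℝ))).indicator this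

/-- Exponential moment of the number of bad blocks. -/
lemma exp_numBad {k m d : ℕ} {ρ b : ℝ} (R : Measure (Fin d → ℝ)) [IsProbabilityMeasure R]
    (θ u : Fin d → ℝ)
    (hb : (Measure.pi fun _ : Fin m => R).real {y | ρ < (∑ i, blockDev θ y i * u i) ^ 2} ≤ b) :
    ∫⁻ x, ENNReal.ofReal (Real.exp (numBad (fun j => blockDev θ (x j)) ρ u))
      ∂(Measure.pi fun _ : Fin k => Measure.pi fun _ : Fin m => R) ≤
    ENNReal.ofReal (Real.exp (k * ((Real.exp 1 - 1) * b))) := by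
  set μ := Measure.pi fun _ : Fin m => R
  set B := {y : Fin m → Fin d → ℝ | ρ < (∑ i, blockDev θ y i * u i) ^ 2} with hB
  have hBm : MeasurableSet B := block_bad_meas θ ρ u
  set f : (Fin m → Fin d → ℝ) → ℝ≥0∞ := fun y =>
    ENNReal.ofReal (Real.exp (B.indicator (fun _ => (1:ℝ)) y)) with hf
  have hfm : Measurable f := by
    have : Measurable (B.indicator (fun _ => (1:ℝ))) := measurable_const.indicator hBm
    fun_prop
  have e : ∀ x : Fin k → Fin m → Fin d → ℝ,
      ENNReal.ofReal (Real.exp (numBad (fun j => blockDev θ (x j)) ρ u)) = ∏ j, f (x j) := by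
    intro x
    rw [numBad, Real.exp_sum, ENNReal.ofReal_prod_of_nonneg fun _ _ => (Real.exp_pos _).le]
    rfl
  simp_rw [e]
  have hI : iIndepFun (fun j (x : Fin k → Fin m → Fin d → ℝ) => f (x j))
      (Measure.pi fun _ : Fin k => μ) :=
    iIndepFun_pi (μ := fun _ : Fin k => μ) (X := fun _ => f) fun _ => hfm.aemeasurable
  rw [lintegral_prod_eq_prod_lintegral_of_indepFun _ _ hI
    fun j => hfm.comp (measurable_pi_apply j)]
  have h1 : ∀ j, ∫⁻ x, f (x j) ∂(Measure.pi fun _ : Fin k => μ) = ∫⁻ y, f y ∂μ := fun j =>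
    (measurePreserving_eval (fun _ : Fin k => μ) j).lintegral_comp hfm
  have h2 : ∫⁻ y, f y ∂μ ≤ ENNReal.ofReal (Real.exp ((Real.exp 1 - 1) * b)) := by
    have e1 : 0 ≤ Real.exp 1 - 1 := by linarith [Real.add_one_le_exp 1]
    have e2 : ∀ y, f y = 1 + B.indicator (fun _ => ENNReal.ofReal (Real.exp 1 - 1)) y := by
      intro y
      by_cases hy : y ∈ B
      · simp only [hf, hy, Set.indicator_of_mem]
        rw [← ENNReal.ofReal_one, ← ENNReal.ofReal_add zero_le_one e1]; congr 1; ring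
      · simp [hf, hy]
    simp_rw [e2]
    rw [lintegral_add_left measurable_const, lintegral_indicator_const hBm]
    simp only [lintegral_const, measure_univ, mul_one]
    rw [← ofReal_measureReal, ← ENNReal.ofReal_mul e1, ← ENNReal.ofReal_one,
      ← ENNReal.ofReal_add zero_le_one (mul_nonneg e1 measureReal_nonneg)]
    refine ENNReal.ofReal_le_ofReal ?_
    have := Real.add_one_le_exp ((Real.exp 1 - 1) * b)
    have := mul_le_mul_of_nonneg_left hb e1
    linarith
  simp_rw [h1]
  rw [Finset.prod_const, Finset.card_univ, Fintype.card_fin, Real.exp_nat_mul,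
    ENNReal.ofReal_pow (Real.exp_pos _).le]
  exact pow_le_pow_left' h2 k

/-- Markov's inequality: outside an event of probability `δ`, the Gaussian average of the normalised exponential is below
`1/δ`. -/
lemma pac_event {k m d : ℕ} (hm : 0 < m) {ρ ε δ : ℝ} (hρ : 0 < ρ) (h0 : 0 ≤ ε) (h1 : ε ≤ 1)
    (hδ : 0 < δ)
    (P R : Measure (Fin d → ℝ)) [IsProbabilityMeasure P] [IsProbabilityMeasure R]
    (hR : ENNReal.ofReal (1 - ε) • P ≤ R) (θ : Fin d → ℝ) (S : Matrix (Fin d) (Fin d) ℝ)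
    (hmean : ∀ i, Integrable (fun x => x i) P ∧ (∫ x, x i ∂P) = θ i)
    (hcov : ∀ i j, Integrable (fun x => (x i - θ i) * (x j - θ j)) P ∧
      (∫ x, (x i - θ i) * (x j - θ j) ∂P) = S i j)
    (π : Measure (Fin d → ℝ)) [IsProbabilityMeasure π] :
    (Measure.pi fun _ : Fin k => Measure.pi fun _ : Fin m => R)
      {x | ENNReal.ofReal (1 / δ) ≤ ∫⁻ u, ENNReal.ofReal (Real.exp
        (numBad (fun j => blockDev θ (x j)) ρ u - k * ((Real.exp 1 - 1) *
          (ε * m + (∑ i, u i * S.mulVec u i) / (m * ρ))))) ∂π} ≤ ENNReal.ofReal δ := by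
  set μ := Measure.pi fun _ : Fin k => Measure.pi fun _ : Fin m => R
  have hSm : Measurable fun u : Fin d → ℝ => ∑ i, u i * S.mulVec u i := by
    unfold Matrix.mulVec dotProduct; fun_prop
  set f : (Fin k → Fin m → Fin d → ℝ) → (Fin d → ℝ) → ℝ≥0∞ := fun x u => ENNReal.ofReal (Real.exp
        (numBad (fun j => blockDev θ (x j)) ρ u - k * ((Real.exp 1 - 1) *
          (ε * m + (∑ i, u i * S.mulVec u i) / (m * ρ))))) with hf
  have hfm : Measurable (Function.uncurry f) := by
    have := numBad_meas (k := k) (m := m) θ ρ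
    have h2 : Measurable fun q : (Fin k → Fin m → Fin d → ℝ) × (Fin d → ℝ) =>
      ∑ i, q.2 i * S.mulVec q.2 i := hSm.comp measurable_snd
    simp only [hf, Function.uncurry_def]
    fun_prop
  have hle : ∫⁻ x, ∫⁻ u, f x u ∂π ∂μ ≤ 1 := by
    rw [lintegral_lintegral_swap hfm.aemeasurable]
    have : ∀ u, ∫⁻ x, f x u ∂μ ≤ 1 := by
      intro u
      have hb := exp_numBad (k := k) R θ u (block_bad hm hρ h0 h1 P R hR θ S hmean hcov u)
      set b := k * ((Real.exp 1 - 1) * (ε * m + (∑ i, u i * S.mulVec u i) / (m * ρ)))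
      have e : ∀ x, f x u = ENNReal.ofReal (Real.exp (-b)) *
          ENNReal.ofReal (Real.exp (numBad (fun j => blockDev θ (x j)) ρ u)) := by
        intro x
        rw [← ENNReal.ofReal_mul (Real.exp_pos _).le, ← Real.exp_add]
        simp only [hf]; congr 2; ring
      simp_rw [e]
      rw [lintegral_const_mul' _ _ ENNReal.ofReal_ne_top]
      refine (mul_le_mul_right hb _).trans ?_
      rw [← ENNReal.ofReal_mul (Real.exp_pos _).le, ← Real.exp_add]; simp
    refine (lintegral_mono this).trans ?_
    simp
  have hpos : 0 < 1 / δ := by positivity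
  refine (meas_ge_le_lintegral_div (f := fun x => ∫⁻ u, f x u ∂π)
    (hfm.lintegral_prod_right'.aemeasurable) (by simpa using hδ)
    ENNReal.ofReal_ne_top).trans ?_
  refine (ENNReal.div_le_div_right hle _).trans (le_of_eq ?_)
  rw [one_div, ← ENNReal.ofReal_inv_of_pos hpos, one_div, inv_inv]

/-- Outside the event of `pac_event`, the number of bad blocks is controlled in all directions at once. -/
lemma pac_det {k d : ℕ} {ρ δ a b : ℝ} (hδ : 0 < δ) {w : NNReal} (hw : w ≠ 0)
    (Y : Fin k → Fin d → ℝ) (S : Matrix (Fin d) (Fin d) ℝ)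
    (h : ∫⁻ u, ENNReal.ofReal (Real.exp (numBad Y ρ u - (a + b * ∑ i, u i * S.mulVec u i)))
      ∂(gaussV w (0 : Fin d → ℝ)) < ENNReal.ofReal (1 / δ)) (v : Fin d → ℝ) :
    numBad Y ρ v / 2 ≤ a + b * ((∑ i, v i * S.mulVec v i) + w * S.trace) +
      (∑ i, v i ^ 2) / (2 * w) + Real.log (1 / δ) := by
  have hp := gaussV_prob w v
  have hSm : Measurable fun u : Fin d → ℝ => ∑ i, u i * S.mulVec u i := by
    unfold Matrix.mulVec dotProduct; fun_prop
  have hA : ∀ j, MeasurableSet {u : Fin d → ℝ | ρ < (∑ i, Y j i * u i) ^ 2} := fun j =>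
    measurableSet_lt measurable_const (by fun_prop)
  have hI : ∀ j, Integrable ({u : Fin d → ℝ | ρ < (∑ i, Y j i * u i) ^ 2}.indicator
      (fun _ => (1:ℝ))) (gaussV w v) := fun j => (integrable_const _).indicator (hA j)
  have hNm : Measurable (numBad Y ρ) := by
    unfold numBad
    exact Finset.measurable_sum _ fun j _ => measurable_const.indicator (hA j)
  have hNi : Integrable (numBad Y ρ) (gaussV w v) := by
    unfold numBad
    exact integrable_finsetSum _ fun j _ => hI j
  have hN : numBad Y ρ v / 2 ≤ ∫ u, numBad Y ρ u ∂(gaussV w v) := by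
    unfold numBad
    rw [integral_finsetSum _ fun j _ => hI j, Finset.sum_div]
    refine Finset.sum_le_sum fun j _ => ?_
    rw [integral_indicator_const _ (hA j), smul_eq_mul, mul_one]
    by_cases hj : ρ < (∑ i, Y j i * v i) ^ 2
    · rw [Set.indicator_of_mem (by exact hj)]
      exact gaussV_half w v (Y j) ρ hj
    · rw [Set.indicator_of_notMem (by exact hj), zero_div]
      exact measureReal_nonneg
  obtain ⟨q1, q2⟩ := gaussV_quad w v S
  have hQi : Integrable (fun u => a + b * ∑ i, u i * S.mulVec u i) (gaussV w v) :=
    (integrable_const _).add (q1.const_mul _)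
  have pac := gaussV_pac hw v (fun u => numBad Y ρ u - (a + b * ∑ i, u i * S.mulVec u i))
    (by fun_prop) (hNi.sub hQi)
  have := pac.trans_lt h
  rw [ENNReal.ofReal_lt_ofReal_iff (by positivity), ← Real.lt_log_iff_exp_lt (by positivity),
    integral_sub hNi hQi, integral_add (integrable_const _) (q1.const_mul _), integral_const_mul,
    q2] at this
  simp only [integral_const, probReal_univ, smul_eq_mul, one_mul] at this
  linarith

/-! ### The block estimator -/

/-- Measurable choice of a point of a sequence satisfying a countable family of measurable
constraints. -/
lemma exists_selector {α β : Type*} [MeasurableSpace α] [MeasurableSpace β] (q : ℕ → β)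
    (G : ℕ → Set α) (hG : ∀ N, MeasurableSet (G N)) :
    ∃ T : α → β, Measurable T ∧ ∀ x, (∃ N, x ∈ G N) → ∃ N, x ∈ G N ∧ T x = q N := by
  classical
  have hp : ∀ x, ∃ N, x ∈ G N ∨ ∀ M, x ∉ G M := by
    intro x
    by_cases h : ∃ N, x ∈ G N
    · exact h.imp fun N => Or.inl
    · exact ⟨0, Or.inr fun M hM => h ⟨M, hM⟩⟩
  have hm : ∀ N, MeasurableSet {x | x ∈ G N ∨ ∀ M, x ∉ G M} := by
    intro N
    have : {x | x ∈ G N ∨ ∀ M, x ∉ G M} = G N ∪ ⋂ M, (G M)ᶜ := by ext x; simp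
    rw [this]
    exact (hG N).union (MeasurableSet.iInter fun M => (hG M).compl)
  refine ⟨fun x => q (Nat.find (hp x)), (measurable_from_top (f := q)).comp (measurable_find hp hm),
    fun x hx => ⟨_, ?_, rfl⟩⟩
  rcases Nat.find_spec (hp x) with h | h
  · exact h
  · obtain ⟨N, hN⟩ := hx
    exact absurd hN (h N)

lemma numBad_mono {k d : ℕ} {Y Z : Fin k → Fin d → ℝ} {ρ σ : ℝ} {u v : Fin d → ℝ}
    (h : ∀ j, ρ < (∑ i, Y j i * u i) ^ 2 → σ < (∑ i, Z j i * v i) ^ 2) :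
    numBad Y ρ u ≤ numBad Z σ v := by
  unfold numBad
  refine Finset.sum_le_sum fun j _ => ?_
  by_cases hj : ρ < (∑ i, Y j i * u i) ^ 2
  · rw [Set.indicator_of_mem (by exact hj), Set.indicator_of_mem (by exact h j hj)]
  · rw [Set.indicator_of_notMem (by exact hj)]
    exact Set.indicator_nonneg (fun _ _ => zero_le_one) _

/-- If neither of two counts reaches half of the blocks, then some block is bad for neither. -/
lemma exists_good {k d : ℕ} {Y Z : Fin k → Fin d → ℝ} {ρ σ : ℝ} {v : Fin d → ℝ}
    (hY : 2 * numBad Y ρ v < k) (hZ : 2 * numBad Z σ v < k) :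
    ∃ j, (∑ i, Y j i * v i) ^ 2 ≤ ρ ∧ (∑ i, Z j i * v i) ^ 2 ≤ σ := by
  by_contra! hc
  have : (k:ℝ) ≤ numBad Y ρ v + numBad Z σ v := by
    unfold numBad
    rw [← Finset.sum_add_distrib]
    have : (k:ℝ) = ∑ _j : Fin k, (1:ℝ) := by simp
    rw [this]
    refine Finset.sum_le_sum fun j _ => ?_
    by_cases hj : ρ < (∑ i, Y j i * v i) ^ 2
    · rw [Set.indicator_of_mem (by exact hj)]
      exact le_add_of_nonneg_right (Set.indicator_nonneg (fun _ _ => zero_le_one) _)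
    · rw [Set.indicator_of_notMem (by exact hj),
        Set.indicator_of_mem (by exact hc j (not_lt.1 hj)), zero_add]
  linarith

lemma blockDev_sub {m d : ℕ} (θ q v : Fin d → ℝ) (y : Fin m → Fin d → ℝ) :
    ∑ i, blockDev q y i * v i = (∑ i, blockDev θ y i * v i) - ∑ i, (q i - θ i) * v i := by
  rw [← Finset.sum_sub_distrib]
  refine Finset.sum_congr rfl fun i _ => ?_
  simp only [blockDev]; ring

/-- The set of samples for which the candidate `q` is compatible with a majority of the block means
in every direction of a dense sequence. -/
def goodSet {k m d : ℕ} (ρ : ℝ) (q : Fin d → ℝ) : Set (Fin k → Fin m → Fin d → ℝ) :=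
  {x | ∀ N : ℕ, 2 * numBad (fun j => blockDev q (x j))
    (4 * ρ * ∑ i, TopologicalSpace.denseSeq (Fin d → ℝ) N i ^ 2)
    (TopologicalSpace.denseSeq (Fin d → ℝ) N) < k}

lemma goodSet_meas {k m d : ℕ} (ρ : ℝ) (q : Fin d → ℝ) :
    MeasurableSet (goodSet (k := k) (m := m) ρ q) := by
  unfold goodSet
  rw [Set.ofPred_forall]
  refine MeasurableSet.iInter fun N => ?_
  have h := (numBad_meas (k := k) (m := m) q
    (4 * ρ * ∑ i, TopologicalSpace.denseSeq (Fin d → ℝ) N i ^ 2)).comp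
    (measurable_prodMk_right (y := TopologicalSpace.denseSeq (Fin d → ℝ) N))
  exact measurableSet_lt (h.const_mul 2) measurable_const

/-- If in every direction a majority of blocks has a small deviation from `θ`, candidates close to
`θ` are compatible with the sample. -/
lemma goodSet_of_close {k m d : ℕ} {ρ : ℝ} {θ q : Fin d → ℝ} {x : Fin k → Fin m → Fin d → ℝ}
    (h : ∀ v, 2 * numBad (fun j => blockDev θ (x j)) (ρ * ∑ i, v i ^ 2) v < k)
    (hq : ∑ i, (q i - θ i) ^ 2 ≤ ρ) : x ∈ goodSet ρ q := by
  intro N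
  set v := TopologicalSpace.denseSeq (Fin d → ℝ) N
  refine lt_of_le_of_lt (mul_le_mul_of_nonneg_left (numBad_mono fun j hj => ?_) zero_le_two) (h v)
  by_contra! hc
  rw [blockDev_sub θ] at hj
  have cs := Finset.sum_mul_sq_le_sq_mul_sq Finset.univ (fun i => q i - θ i) v
  have hv : 0 ≤ ∑ i, v i ^ 2 := Finset.sum_nonneg fun _ _ => sq_nonneg _
  have := mul_le_mul_of_nonneg_right hq hv
  nlinarith [sq_nonneg ((∑ i, blockDev θ (x j) i * v i) + ∑ i, (q i - θ i) * v i)]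

/-- In each direction, `θ` and a compatible candidate `q` are both close to the mean of some common
block, so `q` is close to `θ`. -/
lemma close_of_goodSet {k m d : ℕ} {ρ : ℝ} (hρ : 0 ≤ ρ) {θ q : Fin d → ℝ}
    {x : Fin k → Fin m → Fin d → ℝ}
    (h : ∀ v, 2 * numBad (fun j => blockDev θ (x j)) (ρ * ∑ i, v i ^ 2) v < k)
    (hx : x ∈ goodSet ρ q) : ∑ i, (q i - θ i) ^ 2 ≤ 10 * ρ := by
  have hcl : IsClosed {v : Fin d → ℝ | (∑ i, (q i - θ i) * v i) ^ 2 ≤ 10 * ρ * ∑ i, v i ^ 2} :=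
    isClosed_le (by fun_prop) (by fun_prop)
  have hall : ∀ v : Fin d → ℝ, (∑ i, (q i - θ i) * v i) ^ 2 ≤ 10 * ρ * ∑ i, v i ^ 2 := by
    intro v
    refine (TopologicalSpace.denseRange_denseSeq (Fin d → ℝ)).induction_on
      (p := fun v => (∑ i, (q i - θ i) * v i) ^ 2 ≤ 10 * ρ * ∑ i, v i ^ 2) v hcl fun N => ?_
    obtain ⟨j, h1, h2⟩ := exists_good (hx N) (h (TopologicalSpace.denseSeq (Fin d → ℝ) N))
    set v := TopologicalSpace.denseSeq (Fin d → ℝ) N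
    rw [blockDev_sub θ] at h1
    nlinarith [sq_nonneg ((∑ i, blockDev θ (x j) i * v i) - ∑ i, (q i - θ i) * v i
      + ∑ i, blockDev θ (x j) i * v i)]
  have h1 := hall fun i => q i - θ i
  simp only [← sq] at h1
  rcases (Finset.sum_nonneg fun i (_ : i ∈ Finset.univ) => sq_nonneg (q i - θ i)).eq_or_lt
    with h0 | h0
  · rw [← h0]; positivity
  · rw [sq] at h1
    exact le_of_mul_le_mul_right h1 h0

/-- A bound on the number of bad blocks over unit vectors extends to all vectors by homogeneity. -/
lemma numBad_scale {k d : ℕ} (hk : 0 < k) {ρ : ℝ} {Y : Fin k → Fin d → ℝ}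
    (h : ∀ v, ∑ i, v i ^ 2 = 1 → 2 * numBad Y ρ v < k) (v : Fin d → ℝ) :
    2 * numBad Y (ρ * ∑ i, v i ^ 2) v < k := by
  set q := ∑ i, v i ^ 2 with hq
  have hq0 : 0 ≤ q := Finset.sum_nonneg fun _ _ => sq_nonneg _
  rcases hq0.eq_or_lt with h0 | h0
  · have hv : ∀ i, v i = 0 := by
      intro i
      have := (Finset.sum_eq_zero_iff_of_nonneg (fun i _ => sq_nonneg (v i))).1 h0.symm i
        (Finset.mem_univ i)
      exact pow_eq_zero_iff (two_ne_zero) |>.1 this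
    have : numBad Y (ρ * q) v = 0 := by
      unfold numBad
      refine Finset.sum_eq_zero fun j _ => Set.indicator_of_notMem ?_ _
      simp [hv, ← h0]
    rw [this]; simpa using hk
  · set s := Real.sqrt q with hs
    have hs0 : 0 < s := Real.sqrt_pos.2 h0
    have hss : s ^ 2 = q := Real.sq_sqrt hq0
    refine lt_of_le_of_lt (mul_le_mul_of_nonneg_left (numBad_mono fun j hj => ?_) zero_le_two)
      (h (fun i => v i / s) ?_)
    · have : ∑ i, Y j i * (v i / s) = (∑ i, Y j i * v i) / s := by
        rw [Finset.sum_div]; exact Finset.sum_congr rfl fun i _ => by ring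
      rw [this, div_pow, hss, lt_div_iff₀ h0]
      exact hj
    · simp only [div_pow]
      rw [← Finset.sum_div, ← hq, hss, div_self h0.ne']

/-- Performance of the block estimator under explicit conditions on the number `k` and the size `m`
of the blocks. -/
lemma upper_generic {n d k m : ℕ} {ε δ ρ : ℝ} (hk : 0 < k) (hm : 0 < m) (hkm : k * m ≤ n)
    (he0 : 0 ≤ ε) (he1 : ε ≤ 1) (hδ : 0 < δ) (hδ1 : δ ≤ 1)
    (hkl : 40 * (Real.log (1 / δ) + ε * n) ≤ k) (S : Matrix (Fin d) (Fin d) ℝ)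
    (htr : 0 < S.trace) (hρ : m * ρ = 20 * (matOpNorm S + 10 * S.trace / k)) :
    minimaxQuantile (huberClass n d ε S) (fun θ₁ θ₂ => ∑ i, (θ₁ i - θ₂ i) ^ 2) δ ≤
      ENNReal.ofReal (10 * ρ) := by
  have hk' : (0:ℝ) < k := by exact_mod_cast hk
  have hm' : (0:ℝ) < m := by exact_mod_cast hm
  have hs := matOpNorm_nonneg S
  have hmρ : 0 < m * ρ := by rw [hρ]; positivity
  have hρ0 : 0 < ρ := pos_of_mul_pos_right hmρ hm'.le
  obtain ⟨T, hT, hTsel⟩ := exists_selector (TopologicalSpace.denseSeq (Fin d → ℝ))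
    (fun N => goodSet (k := k) (m := m) ρ (TopologicalSpace.denseSeq (Fin d → ℝ) N))
    fun N => goodSet_meas _ _
  set B : (Fin n → Fin d → ℝ) → Fin k → Fin m → Fin d → ℝ :=
    fun x j l => x (Fin.castLE hkm (finProdFinEquiv (j, l))) with hB
  have hBm : Measurable B := by fun_prop
  refine minimaxQuantile_le _ _ _ _ (T ∘ B) (hT.comp hBm) ?_
  rintro θ _ ⟨P, Q, hP, hQ, hmean, hcov, rfl⟩
  set R := ENNReal.ofReal (1 - ε) • P + ENNReal.ofReal ε • Q with hRdef
  have hRp : IsProbabilityMeasure R := by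
    constructor
    simp only [hRdef, Measure.add_apply, Measure.smul_apply, measure_univ, smul_eq_mul, mul_one]
    rw [← ENNReal.ofReal_add (by linarith) he0]; simp
  have hR : ENNReal.ofReal (1 - ε) • P ≤ R := Measure.le_add_right le_rfl
  -- the relative entropy `1 / (2w)` of the Gaussian shifts by unit vectors is then `k / 20`
  set w : NNReal := 10 / k with hw
  have hw0 : w ≠ 0 := by positivity
  have hπ := gaussV_prob (d := d) w 0
  have hev := pac_event (k := k) hm hρ0 he0 he1 hδ P R hR θ S hmean hcov (gaussV w 0)
  set E := {x : Fin k → Fin m → Fin d → ℝ | ENNReal.ofReal (1 / δ) ≤ ∫⁻ u, ENNReal.ofReal (Real.exp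
        (numBad (fun j => blockDev θ (x j)) ρ u - k * ((Real.exp 1 - 1) *
          (ε * m + (∑ i, u i * S.mulVec u i) / (m * ρ))))) ∂(gaussV w 0)} with hE
  set A := {y : Fin k → Fin m → Fin d → ℝ | ∑ i, (T y i - θ i) ^ 2 ≤ 10 * ρ} with hA
  have hAm : MeasurableSet A := measurableSet_le (by fun_prop) measurable_const
  have hsub : Aᶜ ⊆ E := by
    intro x hx
    by_contra hxE
    refine hx ?_
    have hlt := hxE
    simp only [hE, Set.mem_ofPred_eq, not_le] at hlt
    have hv : ∀ v : Fin d → ℝ, 2 * numBad (fun j => blockDev θ (x j)) (ρ * ∑ i, v i ^ 2) v < k := by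
      refine numBad_scale hk fun v hv1 => ?_
      have e : ∀ u : Fin d → ℝ, k * ((Real.exp 1 - 1) *
          (ε * m + (∑ i, u i * S.mulVec u i) / (m * ρ))) = k * (Real.exp 1 - 1) * (ε * m) +
          k * (Real.exp 1 - 1) / (m * ρ) * ∑ i, u i * S.mulVec u i := by intro u; ring
      simp only [e] at hlt
      have hd := pac_det hδ hw0 _ S hlt v
      rw [hv1] at hd
      have hq := quad_le S v
      rw [hv1, mul_one] at hq
      have hw' : (w:ℝ) = 10 / k := by simp [hw]
      have he := Real.exp_one_lt_d9
      have he' := Real.add_one_le_exp 1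
      have b1 : k * (Real.exp 1 - 1) / (m * ρ) * ((∑ i, v i * S.mulVec v i) + w * S.trace) ≤
          k * (Real.exp 1 - 1) / 20 := by
        have : (∑ i, v i * S.mulVec v i) + w * S.trace ≤ m * ρ / 20 := by
          rw [hρ, hw']
          have : 10 / (k:ℝ) * S.trace = 10 * S.trace / k := by ring
          linarith
        have h0 : 0 ≤ k * (Real.exp 1 - 1) / (m * ρ) :=
          div_nonneg (mul_nonneg hk'.le (by linarith)) hmρ.le
        refine (mul_le_mul_of_nonneg_left this h0).trans (le_of_eq ?_)
        field_simp
      have b2 : 1 / (2 * (w:ℝ)) = k / 20 := by rw [hw']; field_simp; norm_num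
      have hkmn : (k:ℝ) * m ≤ n := by exact_mod_cast hkm
      have b3 : k * (Real.exp 1 - 1) * (ε * m) ≤ 1.72 * (ε * n) := by
        have h1 : k * (Real.exp 1 - 1) * (ε * m) = (Real.exp 1 - 1) * (ε * (k * m)) := by ring
        rw [h1]
        refine mul_le_mul (by linarith) (mul_le_mul_of_nonneg_left hkmn he0) (by positivity)
          (by norm_num)
      have hlog : 0 ≤ Real.log (1 / δ) := Real.log_nonneg (by rw [le_div_iff₀ hδ]; linarith)
      have hen : 0 ≤ ε * n := by positivity
      have b4 : k * (Real.exp 1 - 1) / 20 ≤ k * 1.72 / 20 := by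
        have : (k:ℝ) * (Real.exp 1 - 1) ≤ k * 1.72 :=
          mul_le_mul_of_nonneg_left (by linarith) hk'.le
        linarith
      rw [b2] at hd
      -- the right-hand side of `hd` is at most `(1.72/20 + 1/20 + 1.72/40) * k`, below `k / 4`
      nlinarith
    obtain ⟨N, hN⟩ := (TopologicalSpace.denseRange_denseSeq (Fin d → ℝ)).exists_mem_open
      (s := {q : Fin d → ℝ | ∑ i, (q i - θ i) ^ 2 < ρ})
      (isOpen_lt (by fun_prop) continuous_const) ⟨θ, by simpa using hρ0⟩
    obtain ⟨N', hN', hT'⟩ := hTsel x ⟨N, goodSet_of_close hv (le_of_lt hN)⟩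
    simp only [hA, Set.mem_ofPred_eq, hT']
    exact close_of_goodSet hρ0.le hv hN'
  have hpre : {x | ∑ i, ((T ∘ B) x i - θ i) ^ 2 ≤ 10 * ρ} = B ⁻¹' A := rfl
  rw [hpre, ← Measure.map_apply hBm hAm, pi_map_blocks R hkm]
  have h1 := (measure_mono hsub).trans hev
  rw [ENNReal.ofReal_sub _ hδ.le, ENNReal.ofReal_one, tsub_le_iff_right]
  have h2 := prob_add_prob_compl (μ := Measure.pi fun _ : Fin k => Measure.pi fun _ : Fin m => R) hAm
  rw [← h2]
  gcongr

/-- The upper bound, with `k` blocks where `k` is about `40 (log (1/δ) + ε n)`: enough for the outliers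
to spoil only a fraction of them, and for the deviation probability `exp (-c k)` to be below `δ`. -/
lemma upper_bound {n d : ℕ} {ε δ : ℝ} (he0 : 0 ≤ ε) (he1 : ε < 1 / 300)
    (hδ0 : 0 < δ) (hδ : δ ≤ 1 / 4) (hlog : 160 * Real.log (1 / δ) ≤ n * (1 - 300 * ε))
    (S : Matrix (Fin d) (Fin d) ℝ) (htr : 0 < S.trace) :
    minimaxQuantile (huberClass n d ε S) (fun θ₁ θ₂ => ∑ i, (θ₁ i - θ₂ i) ^ 2) δ ≤
      ENNReal.ofReal (20000 * (S.trace / n + matOpNorm S * ε +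
        matOpNorm S * Real.log (1 / δ) / n)) := by
  set L := Real.log (1 / δ) with hL
  have hL1 : 1 ≤ L := by
    rw [hL, Real.le_log_iff_exp_le (by positivity), le_div_iff₀ hδ0]
    have := Real.exp_one_lt_d9
    nlinarith
  have hs := matOpNorm_nonneg S
  have hn0 : (0:ℝ) ≤ n := n.cast_nonneg
  have hen : 0 ≤ ε * n := by positivity
  have hn160 : (160:ℝ) ≤ n := by nlinarith
  have hn : (0:ℝ) < n := by linarith
  set k := ⌈40 * (L + ε * n)⌉₊ with hk
  have hkl : 40 * (L + ε * n) ≤ k := Nat.le_ceil _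
  have hku : (k:ℝ) < 40 * (L + ε * n) + 1 := Nat.ceil_lt_add_one (by positivity)
  have hk' : (0:ℝ) < k := by nlinarith
  have hk0 : 0 < k := by exact_mod_cast hk'
  have h2k : 2 * k ≤ n := by
    have : 2 * (k:ℝ) ≤ n := by nlinarith
    exact_mod_cast this
  set m := n / k with hm
  have hkm : k * m ≤ n := Nat.mul_div_le n k
  have hm0 : 0 < m := Nat.div_pos (by omega) hk0
  have hm' : (0:ℝ) < m := by exact_mod_cast hm0
  have hnm : (n:ℝ) ≤ 2 * k * m := by
    have h1 : n < k * (m + 1) := Nat.lt_mul_div_succ n hk0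
    have h2 : k * (m + 1) ≤ 2 * k * m := by nlinarith
    exact_mod_cast h1.le.trans h2
  refine (upper_generic (ρ := 20 * (matOpNorm S + 10 * S.trace / k) / m) hk0 hm0 hkm he0
    (by linarith) hδ0 (by linarith) hkl S htr (by field_simp)).trans
    (ENNReal.ofReal_le_ofReal ?_)
  have e1 : 10 * (20 * (matOpNorm S + 10 * S.trace / k) / m) =
      200 * (matOpNorm S * k + 10 * S.trace) / (k * m) := by field_simp; ring
  have e2 : 20000 * (S.trace / n + matOpNorm S * ε + matOpNorm S * L / n) =
      20000 * (S.trace + matOpNorm S * (ε * n) + matOpNorm S * L) / n := by field_simp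
  rw [e1, e2, div_le_div_iff₀ (by positivity) hn]
  have hkb : matOpNorm S * k ≤ matOpNorm S * (41 * L + 40 * (ε * n)) :=
    mul_le_mul_of_nonneg_left (by linarith) hs
  have hse : 0 ≤ matOpNorm S * (ε * n) := by positivity
  have hsl : 0 ≤ matOpNorm S * L := by positivity
  calc 200 * (matOpNorm S * k + 10 * S.trace) * n
      ≤ 200 * (matOpNorm S * k + 10 * S.trace) * (2 * k * m) := by gcongr
    _ = 400 * (matOpNorm S * k + 10 * S.trace) * (k * m) := by ring
    _ ≤ _ := by
        refine mul_le_mul_of_nonneg_right ?_ (by positivity)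
        linarith

/-! ### The minimax rate -/

/-- robust mean estimation under Huber contamination in squared Euclidean
norm. -/
theorem robust_mean_estimation_huber :
    ∃ c c₁ C₁ : ℝ, 0 < c ∧ 0 < c₁ ∧ 0 < C₁ ∧
      ∀ n d : ℕ, 0 < n → 0 < d → ∀ ε : ℝ, 0 ≤ ε → ε < 1 →
        ∀ S : Matrix (Fin d) (Fin d) ℝ, S.PosDef →
          ∀ δ : ℝ, Real.exp (-(c * n * (1 - 300 * ε))) ≤ δ → δ ≤ 1/4 →
            ENNReal.ofReal (c₁ * (S.trace / n + matOpNorm S * ε +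
                matOpNorm S * Real.log (1/δ) / n)) ≤
                minimaxQuantile (huberClass n d ε S)
                  (fun θ₁ θ₂ => ∑ i, (θ₁ i - θ₂ i) ^ 2) δ ∧
              minimaxQuantile (huberClass n d ε S)
                  (fun θ₁ θ₂ => ∑ i, (θ₁ i - θ₂ i) ^ 2) δ ≤
                ENNReal.ofReal (C₁ * (S.trace / n + matOpNorm S * ε +
                  matOpNorm S * Real.log (1/δ) / n)) := by
  refine ⟨1 / 160, 1 / 96, 20000, by norm_num, by norm_num, by norm_num, ?_⟩
  intro n d hn hd ε he0 he1 S hS δ hδl hδ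
  have hδ0 : 0 < δ := (Real.exp_pos _).trans_le hδl
  have hn' : (0:ℝ) < n := by exact_mod_cast hn
  have hlog : 160 * Real.log (1 / δ) ≤ n * (1 - 300 * ε) := by
    have := (Real.le_log_iff_exp_le hδ0).2 hδl
    rw [one_div, Real.log_inv]
    linarith
  have hL0 : 0 < Real.log (1 / δ) := Real.log_pos (by rw [lt_div_iff₀ hδ0]; linarith)
  -- a nonpositive exponent budget would force `δ ≥ 1`
  have he : ε < 1 / 300 := by
    by_contra! hc
    have : n * (1 - 300 * ε) ≤ 0 := mul_nonpos_of_nonneg_of_nonpos hn'.le (by linarith)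
    linarith
  have : Nonempty (Fin d) := ⟨⟨0, hd⟩⟩
  refine ⟨lower_bound hn hd he0 (by linarith) hδ0 hδ ?_ S hS,
    upper_bound he0 he hδ0 hδ hlog S hS.trace_pos⟩
  nlinarith [mul_nonneg hn'.le he0]
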